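/- arXiv:math/0611151 — 6 statements merged into one kernel-verified Lean document; each statement's English description precedes it below -/
import Mathlib

section
/- Let q > 3 be a prime with q ≡ 4 or 5 (mod 9), let p be a prime with p ≡ 1 (mod 3) and p ≠ q, and let L, M be integers with 4p = L² + 27M². Then q^{(p−1)/3} ≡ −(L + 3M)·(6M)⁻¹ (mod p) if and only if there exists an integer t such that (t³ − 3t² − 9t + 3)·L ≡ 3(t³ + 9t² − 9t − 9)·M (mod q). -/
abbrev EZ := QuadraticAlgebra ℤ (-1) (-1)

namespace EZ

noncomputable def phi {A : Type*} [CommRing A] (w : A) (hw : w ^ 2 + w + 1 = 0) : EZ →+* A where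
  toFun z := z.re + z.im * w
  map_zero' := by simp
  map_one' := by
    change ((1 : ℤ) : A) + ((0 : ℤ) : A) * w = 1
    simp
  map_add' z z' := by simp; ring
  map_mul' z z' := by
    simp
    linear_combination (-(z.im : A) * z'.im) * hw

lemma phi_apply {A : Type*} [CommRing A] (w : A) (hw : w ^ 2 + w + 1 = 0) (z : EZ) :
    phi w hw z = z.re + z.im * w := rfl

/-- The cube root of unity. -/
def om : EZ := ⟨0, 1⟩

lemma om_rel : om ^ 2 + om + 1 = 0 := by
  rw [pow_two]; ext <;> simp [om] <;> rfl

lemma phi_om {A : Type*} [CommRing A] (w : A) (hw : w ^ 2 + w + 1 = 0) :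
    phi w hw om = w := by simp [phi_apply, om]

lemma exists_complex : ∃ w : ℂ, ∃ hw : w ^ 2 + w + 1 = 0, Function.Injective (phi w hw) := by
  have hp := Complex.isPrimitiveRoot_exp 3 (by norm_num)
  set w := Complex.exp (2 * Real.pi * Complex.I / (3 : ℕ)) with hwdef
  have hw : w ^ 2 + w + 1 = 0 := by
    have := hp.geom_sum_eq_zero (by norm_num)
    simp [Finset.sum_range_succ] at this
    linear_combination this
  refine ⟨w, hw, ?_⟩
  rw [injective_iff_map_eq_zero]
  intro z hz
  rw [phi_apply] at hz
  have h1 : ((z.re ^ 2 - z.re * z.im + z.im ^ 2 : ℤ) : ℂ) = 0 := by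
    push_cast
    linear_combination (z.re - z.im - z.im * w : ℂ) * hz + (z.im : ℂ) ^ 2 * hw
  have h2 : z.re ^ 2 - z.re * z.im + z.im ^ 2 = 0 := by exact_mod_cast h1
  have h3 : z.im = 0 := by nlinarith [sq_nonneg (2 * z.re - z.im), sq_nonneg z.im]
  have h4 : z.re = 0 := by rw [h3] at h2; simpa using h2
  ext <;> simp [h3, h4]

instance : IsDomain EZ := by
  obtain ⟨w, hw, hi⟩ := exists_complex
  exact hi.isDomain (phi w hw)

lemma cube {A : Type*} [CommRing A] {w : A} (hw : w ^ 2 + w + 1 = 0) : w ^ 3 = 1 := by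
  linear_combination (w - 1) * hw

lemma ne_one {A : Type*} [CommRing A] {w : A} (hw : w ^ 2 + w + 1 = 0)
    (h3 : (3 : A) ≠ 0) : w ≠ 1 := by
  rintro rfl
  apply h3
  linear_combination hw

lemma prim {A : Type*} [CommRing A] [IsDomain A] {w : A} (hw : w ^ 2 + w + 1 = 0)
    (h3 : (3 : A) ≠ 0) : IsPrimitiveRoot w 3 := by
  have : Fact (Nat.Prime 3) := ⟨by norm_num⟩
  rw [← orderOf_eq_prime (cube hw) (ne_one hw h3)]
  exact IsPrimitiveRoot.orderOf w

lemma om_prim : IsPrimitiveRoot om 3 := by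
  apply prim om_rel
  exact_mod_cast (show (3 : ℕ) ≠ 0 by norm_num)

lemma exists_char (p : ℕ) [Fact p.Prime] (hp3 : p % 3 = 1) (r : ZMod p)
    (hr : r ^ 2 + r + 1 = 0) :
    ∃ χ : MulChar (ZMod p) EZ, χ ^ 3 = 1 ∧ χ ≠ 1 ∧
      ∀ x, phi r hr (χ x) = x ^ ((p - 1) / 3) := by
  have hpp : p.Prime := Fact.out
  have hp2 := hpp.two_le
  obtain ⟨m, hm⟩ : ∃ m, p = 3 * m + 1 := ⟨p / 3, by omega⟩
  have hm' : (p - 1) / 3 = m := by omega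
  have hm0 : m ≠ 0 := by omega
  rw [hm']
  obtain ⟨g, hg⟩ := IsCyclic.exists_generator (α := (ZMod p)ˣ)
  have hord : orderOf g = p - 1 := by
    rw [orderOf_eq_card_of_forall_mem_zpowers hg, Nat.card_eq_fintype_card, ZMod.card_units]
  set c : ZMod p := (g : ZMod p) ^ m with hc
  have hc3 : c ^ 3 = 1 := by
    rw [hc, ← pow_mul]
    have := pow_orderOf_eq_one g
    rw [hord] at this
    have h2 : m * 3 = p - 1 := by omega
    rw [h2, ← Units.val_pow_eq_pow_val, this, Units.val_one]
  have hc1 : c ≠ 1 := by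
    intro h
    have h1 : g ^ m = 1 := by
      ext; simpa using h
    have := orderOf_dvd_of_pow_eq_one h1
    rw [hord] at this
    have := Nat.le_of_dvd (by omega) this
    omega
  have hcr : c ^ 2 + c + 1 = 0 := by
    have : (c - 1) * (c ^ 2 + c + 1) = 0 := by linear_combination hc3
    rcases mul_eq_zero.1 this with h | h
    · exact absurd (sub_eq_zero.1 h) hc1
    · exact h
  obtain ⟨w, hw3, hwc⟩ : ∃ w : EZ, w ^ 3 = 1 ∧ phi r hr w = c := by
    have : (c - r) * (c - r ^ 2) = 0 := by
      linear_combination hcr + (r - 1 - c) * hr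
    rcases mul_eq_zero.1 this with h | h
    · exact ⟨om, cube om_rel, by rw [phi_om]; exact (sub_eq_zero.1 h).symm⟩
    · refine ⟨om ^ 2, ?_, by rw [map_pow, phi_om]; exact (sub_eq_zero.1 h).symm⟩
      rw [← pow_mul, mul_comm, pow_mul, cube om_rel, one_pow]
  let W : EZˣ := ⟨w, w ^ 2, by rw [← hw3]; ring, by rw [← hw3]; ring⟩
  have hW : W ∈ rootsOfUnity (Fintype.card (ZMod p)ˣ) EZ := by
    rw [mem_rootsOfUnity, ZMod.card_units]
    ext1
    have h2 : p - 1 = 3 * m := by omega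
    rw [h2, Units.val_pow_eq_pow_val, pow_mul]
    change (w ^ 3) ^ m = 1
    rw [hw3, one_pow]
  have hχg : MulChar.ofRootOfUnity hW hg g = w := MulChar.ofRootOfUnity_spec hW hg
  refine ⟨MulChar.ofRootOfUnity hW hg, ?_, ?_, ?_⟩
  · rw [MulChar.eq_iff hg, MulChar.pow_apply_coe, hχg, hw3, MulChar.one_apply_coe]
  · intro h
    rw [h, MulChar.one_apply_coe] at hχg
    rw [← hχg, map_one] at hwc
    exact hc1 hwc.symm
  · intro x
    by_cases hx : x = 0
    · rw [hx, MulChar.map_zero, map_zero, zero_pow hm0]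
    · have := hg (Units.mk0 x hx)
      rw [← mem_powers_iff_mem_zpowers] at this
      obtain ⟨k, hk⟩ := this
      have hx' : x = (g : ZMod p) ^ k := by
        have := congrArg Units.val hk
        simpa using this.symm
      rw [hx', map_pow, hχg, map_pow, hwc, hc, ← pow_mul, ← pow_mul, mul_comm]

lemma jacobi_mod (p : ℕ) [Fact p.Prime] (m : ℕ) (hm : 2 * m < p - 1) :
    ∑ x : ZMod p, x ^ m * (1 - x) ^ m = 0 := by
  have h : ∀ x : ZMod p, x ^ m * (1 - x) ^ m =
      ∑ i ∈ Finset.range (m + 1), ((-1) ^ i * (m.choose i : ZMod p)) * x ^ (m + i) := by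
    intro x
    rw [sub_eq_add_neg, add_comm, add_pow, Finset.mul_sum]
    refine Finset.sum_congr rfl fun i _ => ?_
    rw [neg_pow]
    ring
  simp_rw [h]
  rw [Finset.sum_comm]
  refine Finset.sum_eq_zero fun i hi => ?_
  rw [← Finset.mul_sum, FiniteField.sum_pow_lt_card_sub_one, mul_zero]
  rw [ZMod.card]
  have := Finset.mem_range.1 hi
  omega

lemma om_sq_rel : (om ^ 2) ^ 2 + om ^ 2 + 1 = 0 := by
  linear_combination (om ^ 2 - om + 1) * om_rel

lemma char_conj {p : ℕ} [Fact p.Prime] {χ : MulChar (ZMod p) EZ} (h3 : χ ^ 3 = 1) :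
    χ.ringHomComp (phi (om ^ 2) om_sq_rel) = χ⁻¹ := by
  rw [eq_inv_iff_mul_eq_one]
  apply MulChar.ext
  intro x
  obtain ⟨k, -, hk⟩ := MulChar.exists_apply_eq_pow h3 om_prim (a := (x : ZMod p)) x.ne_zero
  rw [MulChar.mul_apply, MulChar.ringHomComp_apply, hk, map_pow, phi_om, MulChar.one_apply_coe,
    ← mul_pow, show om ^ 2 * om = om ^ 3 by ring, cube om_rel, one_pow]

lemma jacobi_props (p : ℕ) [Fact p.Prime] (hp3 : p % 3 = 1) (r : ZMod p)
    (hr : r ^ 2 + r + 1 = 0) (χ : MulChar (ZMod p) EZ) (h3 : χ ^ 3 = 1) (h1 : χ ≠ 1)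
    (hχ : ∀ x, phi r hr (χ x) = x ^ ((p - 1) / 3)) (a b : ℤ)
    (hJ : jacobiSum χ χ = ⟨a, b⟩) :
    3 ∣ b ∧ a ^ 2 - a * b + b ^ 2 = p ∧ (a : ZMod p) + b * r = 0 := by
  have hpp : p.Prime := Fact.out
  have hp2 := hpp.two_le
  refine ⟨?_, ?_, ?_⟩
  · obtain ⟨z, -, hz⟩ := exists_jacobiSum_eq_neg_one_add (n := 3) (by norm_num) h3 h3
      (by rw [ZMod.card]; omega) om_prim
    rw [hJ] at hz
    have h2 : (om - 1) ^ 2 = -3 * om := by linear_combination om_rel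
    rw [h2] at hz
    have h3 : z * (-3 * om) = (-3 : ℤ) • (z * om) := by
      simp; ring
    rw [h3] at hz
    have h4 := congrArg QuadraticAlgebra.im hz
    rw [QuadraticAlgebra.im_add, QuadraticAlgebra.im_smul] at h4
    have h5 : (-1 : EZ).im = 0 := rfl
    rw [h5] at h4
    change b = _ at h4
    rw [h4, zero_add]
    exact ⟨-(z * om).im, by rw [smul_eq_mul]; ring⟩
  · obtain ⟨w, hw, hi⟩ := exists_complex
    have hne : (χ.ringHomComp (phi w hw)) ≠ 1 := (MulChar.ringHomComp_ne_one_iff hi).2 h1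
    have key := jacobiSum_mul_jacobiSum_inv (F := ZMod p) (F' := ℂ)
      (χ := χ.ringHomComp (phi w hw)) (φ := χ.ringHomComp (phi w hw)) ?_ hne hne ?_
    · rw [MulChar.ringHomComp_inv, jacobiSum_ringHomComp, jacobiSum_ringHomComp, ← char_conj h3,
        jacobiSum_ringHomComp, hJ, ← map_mul, ZMod.card, ← map_natCast (phi w hw)] at key
      have := congrArg QuadraticAlgebra.re (hi key)
      rw [phi_apply, pow_two] at this
      simp [om] at this
      rw [← this]
      ring
    · rw [ringChar.eq ℂ 0, ringChar.eq (ZMod p) p]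
      omega
    · rw [← MulChar.ringHomComp_mul, MulChar.ringHomComp_ne_one_iff hi]
      intro h
      apply h1
      rw [← h3, pow_succ, pow_two, h, one_mul]
  · have := congrArg (phi r hr) hJ
    rw [phi_apply r hr ⟨a, b⟩] at this
    rw [← this, jacobiSum, map_sum]
    simp only [map_mul, hχ]
    exact jacobi_mod p _ (by omega)

lemma uniq (p : ℕ) (hpp : p.Prime) (hp3 : p % 3 = 1) (a b a' b' : ℤ) (r : ZMod p)
    (h : a ^ 2 - a * b + b ^ 2 = p) (h' : a' ^ 2 - a' * b' + b' ^ 2 = p)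
    (hb : 3 ∣ b) (hb' : 3 ∣ b') (hr : (a : ZMod p) + b * r = 0)
    (hr' : (a' : ZMod p) + b' * r = 0) :
    (a = a' ∧ b = b') ∨ (a = -a' ∧ b = -b') := by
  have hp0 : (p : ℤ) ≠ 0 := by exact_mod_cast hpp.ne_zero
  have hpi : Prime (p : ℤ) := Nat.prime_iff_prime_int.1 hpp
  have hY : (p : ℤ) ∣ b * a' - a * b' := by
    rw [← ZMod.intCast_zmod_eq_zero_iff_dvd]
    push_cast
    linear_combination b * hr' - b' * hr
  obtain ⟨y, hy⟩ := hY
  have hN : (a * a' + b * b' - a * b') ^ 2 - (a * a' + b * b' - a * b') * (b * a' - a * b')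
      + (b * a' - a * b') ^ 2 = p ^ 2 := by
    rw [pow_two (p : ℤ)]
    nth_rw 1 [← h]
    rw [← h']
    ring
  have hX : (p : ℤ) ∣ a * a' + b * b' - a * b' := by
    apply hpi.dvd_of_dvd_pow (n := 2)
    rw [hy] at hN
    exact ⟨p + (a * a' + b * b' - a * b') * y - p * y ^ 2, by linear_combination hN⟩
  obtain ⟨x, hx⟩ := hX
  rw [hx, hy] at hN
  have hxy : x ^ 2 - x * y + y ^ 2 = 1 := by
    have : (p : ℤ) ^ 2 * (x ^ 2 - x * y + y ^ 2) = p ^ 2 * 1 := by linear_combination hN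
    exact mul_left_cancel₀ (pow_ne_zero 2 hp0) this
  have h3y : 3 ∣ y := by
    have h1 : (3 : ℤ) ∣ p * y := by
      rw [← hy]
      exact dvd_sub (hb.mul_right _) (hb'.mul_left _)
    rcases Int.prime_three.dvd_or_dvd h1 with h | h
    · omega
    · exact h
  obtain ⟨z, hz⟩ := h3y
  have hz0 : z = 0 := by
    subst hz
    have : z ^ 2 < 1 := by nlinarith [sq_nonneg (2 * x - 3 * z)]
    nlinarith
  have hy0 : y = 0 := by omega
  rw [hy0] at hy hxy
  have hx1 : x = 1 ∨ x = -1 := by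
    exact sq_eq_one_iff.1 (by linear_combination hxy)
  have ha : a * p = a' * (p * x) := by
    rw [← hx, ← h']; linear_combination (-b') * hy
  have hbb : b * p = b' * (p * x) := by
    rw [← hx, ← h']; linear_combination (a' - b') * hy
  rcases hx1 with rfl | rfl
  · left
    exact ⟨mul_right_cancel₀ hp0 (by linear_combination ha),
      mul_right_cancel₀ hp0 (by linear_combination hbb)⟩
  · right
    exact ⟨mul_right_cancel₀ hp0 (by linear_combination ha),
      mul_right_cancel₀ hp0 (by linear_combination hbb)⟩

section field

variable {K : Type*} [Field K]

lemma gauss_aux (p q : ℕ) [Fact p.Prime] [Fact q.Prime] [CharP K q] [IsAlgClosed K]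
    (hpq : p ≠ q) (χ : MulChar (ZMod p) K) (h3 : χ ^ 3 = 1) (h1 : χ ≠ 1) :
    (∀ n, q = 3 * n + 1 → (p * jacobiSum χ χ) ^ n * χ q = 1) ∧
    (∀ n, q + 1 = 3 * n → (p * jacobiSum χ χ) ^ n = χ q * p) := by
  have hpp : p.Prime := Fact.out
  have hqp : q.Prime := Fact.out
  have f3 : Fact (Nat.Prime 3) := ⟨by norm_num⟩
  have hord : orderOf χ = 3 := orderOf_eq_prime h3 h1
  have hpK : (p : K) ≠ 0 := by
    rw [Ne, CharP.cast_eq_zero_iff K q]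
    intro h
    exact hpq ((Nat.prime_dvd_prime_iff_eq hqp hpp).1 h).symm
  have : NeZero (p : K) := ⟨hpK⟩
  obtain ⟨ζ, hζ⟩ := HasEnoughRootsOfUnity.exists_primitiveRoot K p
  set ψ := AddChar.zmodChar p hζ.pow_eq_one with hψ
  have hprim : ψ.IsPrimitive := AddChar.zmodChar_primitive_of_primitive_root p hζ
  have hqu : IsUnit (q : ZMod p) := by
    rw [isUnit_iff_ne_zero, Ne, ZMod.natCast_eq_zero_iff]
    intro h
    exact hpq ((Nat.prime_dvd_prime_iff_eq hpp hqp).1 h)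
  have hm1 : χ (-1) = 1 := by
    have e2 : χ (-1) ^ 2 = 1 := by rw [← map_pow]; simp
    have e3 : χ (-1) ^ 3 = 1 := by
      rw [← MulChar.pow_apply' χ (by norm_num), h3, MulChar.one_apply (by simp)]
    rw [pow_succ, e2, one_mul] at e3
    exact e3
  have hcq : χ (q : ZMod p) ^ 3 = 1 := by
    rw [← MulChar.pow_apply' χ (by norm_num), h3, MulChar.one_apply hqu]
  set g := gaussSum χ ψ with hg
  have hg3 : g ^ 3 = p * jacobiSum χ χ := by
    have := gaussSum_pow_eq_prod_jacobiSum (χ := χ) (by rw [hord]; norm_num) hprim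
    rw [hord, hm1, ZMod.card] at this
    simpa using this
  have hcard : ((Fintype.card (ZMod p) : ℕ) : K) ≠ 0 := by rwa [ZMod.card]
  have hg0 : g ≠ 0 := gaussSum_ne_zero_of_nontrivial hcard h1 hprim
  have hfrob := gaussSum_frob q χ ψ
  rw [AddChar.pow_mulShift] at hfrob
  have hshift := gaussSum_mulShift (χ ^ q) ψ hqu.unit
  rw [IsUnit.unit_spec, ← hfrob] at hshift
  constructor
  · intro n hn
    have hχq : χ ^ q = χ := by rw [hn, pow_succ, pow_mul, h3, one_pow, one_mul]
    rw [hχq, ← hg] at hshift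
    rw [← hg3, ← pow_mul]
    apply mul_right_cancel₀ hg0
    rw [one_mul]
    conv_rhs => rw [← hshift]
    conv_rhs => rw [show g ^ q = g ^ (3 * n) * g by rw [hn, pow_succ]]
    ring
  · intro n hn
    have hχq : χ ^ q = χ ^ 2 := by
      have h4 : q = 3 * (n - 1) + 2 := by omega
      rw [h4, pow_add, pow_mul, h3, one_pow, one_mul]
    have hmul := gaussSum_mul_gaussSum_pow_orderOf_sub_one h1 hprim
    rw [hord, hm1, ZMod.card, one_mul, show 3 - 1 = 2 from rfl, ← hχq, ← hshift, hχq,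
      MulChar.pow_apply' χ (by norm_num), ← hg] at hmul
    rw [← hg3, ← pow_mul, ← hn, ← hmul, pow_succ]
    linear_combination (-(g ^ q * g)) * hcq

lemma slope_aux [IsAlgClosed K] (w : K) (hw : w ^ 2 + w + 1 = 0) (h2 : (2 : K) ≠ 0)
    (h3 : (3 : K) ≠ 0) (s : K) (hs : s = 2 * w + 1) (P : K → Prop) (n : ℕ) (v : K)
    (hv : v ≠ 0)
    (H1 : ∀ t, P t → t + s ≠ 0 → t - s ≠ 0 → ((t - s) / (t + s)) ^ (3 * n) = 1)
    (H2 : ∀ u, u ≠ 1 → u ≠ 0 → u ^ (3 * n) = 1 → P (s * (1 + u) / (1 - u))) :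
    v ^ n = w ^ n ↔ ∃ t, P t ∧ v * (t + s) ^ 3 = w * (t - s) ^ 3 := by
  have hw3 := cube hw
  have hw1 := ne_one hw h3
  have hw0 : w ≠ 0 := by rintro rfl; simp at hw3
  have hs2 : s ^ 2 = -3 := by rw [hs]; linear_combination 4 * hw
  have hs0 : s ≠ 0 := by
    rintro rfl
    apply h3
    linear_combination hs2
  constructor
  · intro h
    obtain ⟨u0, hu0⟩ := IsAlgClosed.exists_pow_nat_eq (v / w) (n := 3) (by norm_num)
    obtain ⟨u, hu, hu1⟩ : ∃ u, u ^ 3 = v / w ∧ u ≠ 1 := by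
      by_cases hh : u0 = 1
      · exact ⟨w, by rw [hw3, ← hu0, hh, one_pow], hw1⟩
      · exact ⟨u0, hu0, hh⟩
    have hun : u ≠ 0 := by
      rintro rfl
      rw [eq_div_iff hw0] at hu
      simp at hu
      exact hv hu.symm
    have hpow : u ^ (3 * n) = 1 := by
      rw [pow_mul, hu, div_pow, h, div_self (pow_ne_zero _ hw0)]
    refine ⟨_, H2 u hu1 hun hpow, ?_⟩
    have hu1' : 1 - u ≠ 0 := sub_ne_zero.2 hu1.symm
    rw [eq_div_iff hw0] at hu
    have e1 : s * (1 + u) / (1 - u) + s = 2 * s / (1 - u) := by field_simp; ring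
    have e2 : s * (1 + u) / (1 - u) - s = 2 * s / (1 - u) * u := by field_simp; ring
    rw [e1, e2, mul_pow, ← hu]
    ring
  · rintro ⟨t, ht, h⟩
    have hp : t + s ≠ 0 := by
      intro h0
      rw [h0] at h
      have h5 : (t - s) ^ 3 = 0 := by
        have : w * (t - s) ^ 3 = 0 := by rw [← h]; ring
        exact (mul_eq_zero.1 this).resolve_left hw0
      have h6 : t - s = 0 := by simpa using h5
      have : 2 * s = 0 := by linear_combination h0 - h6
      exact (mul_ne_zero h2 hs0) this
    have hm : t - s ≠ 0 := by
      intro h0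
      rw [h0] at h
      have h5 : v * (t + s) ^ 3 = 0 := by rw [h]; ring
      exact mul_ne_zero hv (pow_ne_zero 3 hp) h5
    have hv' : v = w * ((t - s) / (t + s)) ^ 3 := by
      rw [div_pow, ← mul_div_assoc, eq_div_iff (pow_ne_zero 3 hp), h]
    rw [hv', mul_pow, ← pow_mul, H1 t ht hp hm, mul_one]

end field

end EZ

/-- For a prime `q > 3` with `q ≡ ±4 (mod 9)` and a prime `p ≡ 1 (mod 3)`, `p ≠ q`,
with `4p = L² + 27M²`: `F_q(L,M) = ω` iff
`(t³−3t²−9t+3)L ≡ 3(t³+9t²−9t−9)M (mod q)` for some integer `t`. -/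
theorem omega_slopes_four_mod_nine (q p : ℕ) (hq : q.Prime) (hq3 : 3 < q)
    (hq9 : q % 9 = 4 ∨ q % 9 = 5)
    (hp : p.Prime) (hp3 : p % 3 = 1) (hpq : p ≠ q)
    (L M : ℤ) (h : (4 * p : ℤ) = L ^ 2 + 27 * M ^ 2) :
    ((q : ZMod p) ^ ((p - 1) / 3) =
        ((-(L + 3 * M) : ℤ) : ZMod p) * (((6 * M : ℤ) : ZMod p))⁻¹) ↔
      ∃ t : ℤ, (t ^ 3 - 3 * t ^ 2 - 9 * t + 3) * L ≡
        3 * (t ^ 3 + 9 * t ^ 2 - 9 * t - 9) * M [ZMOD (q : ℤ)] := by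
  have fp : Fact p.Prime := ⟨hp⟩
  have fq : Fact q.Prime := ⟨hq⟩
  have hp7 : 7 ≤ p := by
    have := hp.two_le
    by_contra hlt
    interval_cases p <;> simp_all <;> revert hp <;> decide
  have hpi : Prime (p : ℤ) := Nat.prime_iff_prime_int.1 hp
  have small : ∀ k : ℤ, 0 < k → k < 7 → ¬ (p : ℤ) ∣ k := by
    intro k h0 h7 hd
    have := Int.le_of_dvd h0 hd
    omega
  have hM : ¬ (p : ℤ) ∣ M := by
    intro hd
    have hL : (p : ℤ) ∣ L := by
      apply hpi.dvd_of_dvd_pow (n := 2)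
      have : L ^ 2 = p * 4 - M * (27 * M) := by linear_combination -h
      rw [this]
      exact dvd_sub (dvd_mul_right _ _) (hd.mul_right _)
    obtain ⟨x, hx⟩ := hd
    obtain ⟨y, hy⟩ := hL
    apply small 4 (by norm_num) (by norm_num)
    refine ⟨y ^ 2 + 27 * x ^ 2, ?_⟩
    apply mul_left_cancel₀ hpi.ne_zero
    rw [hx, hy] at h
    linear_combination h
  have h6M : ((6 * M : ℤ) : ZMod p) ≠ 0 := by
    rw [Ne, ZMod.intCast_zmod_eq_zero_iff_dvd]
    intro hd
    rcases hpi.dvd_or_dvd hd with hd | hd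
    · exact small 6 (by norm_num) (by norm_num) hd
    · exact hM hd
  have h2p : (2 : ZMod p) ≠ 0 := by
    have : ((2 : ℤ) : ZMod p) ≠ 0 := by
      rw [Ne, ZMod.intCast_zmod_eq_zero_iff_dvd]
      exact small 2 (by norm_num) (by norm_num)
    exact_mod_cast this
  have h3p : (3 : ZMod p) ≠ 0 := by
    have : ((3 : ℤ) : ZMod p) ≠ 0 := by
      rw [Ne, ZMod.intCast_zmod_eq_zero_iff_dvd]
      exact small 3 (by norm_num) (by norm_num)
    exact_mod_cast this
  set r : ZMod p := ((-(L + 3 * M) : ℤ) : ZMod p) * (((6 * M : ℤ) : ZMod p))⁻¹ with hrdef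
  have hr6 : r * (6 * M) = -(L + 3 * M) := by
    have : r * ((6 * M : ℤ) : ZMod p) = ((-(L + 3 * M) : ℤ) : ZMod p) := by
      rw [hrdef, mul_assoc, inv_mul_cancel₀ h6M, mul_one]
    push_cast at this
    exact this
  have hzp : (L : ZMod p) ^ 2 + 27 * M ^ 2 = 0 := by
    have := congrArg (Int.cast : ℤ → ZMod p) h
    push_cast at this
    rw [← this]
    simp
  have hr : r ^ 2 + r + 1 = 0 := by
    have h6 : (6 * M : ZMod p) ≠ 0 := by
      push_cast at h6M
      exact h6M
    apply (mul_eq_zero.1 (?_ : (6 * M : ZMod p) ^ 2 * (r ^ 2 + r + 1) = 0)).resolve_left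
      (pow_ne_zero 2 h6)
    linear_combination hzp + (r * (6 * M) - (L + 3 * M) + 6 * M) * hr6
  obtain ⟨a', ha'⟩ : ∃ a', L + 3 * M = 2 * a' := by
    have : Even (L ^ 2 + 27 * M ^ 2) := ⟨2 * p, by rw [← h]; ring⟩
    have h2 : Even (L + 3 * M) := by
      simp only [Int.even_add, Int.even_mul, Int.even_pow] at this ⊢
      have e1 : ¬ Even (27 : ℤ) := by decide
      have e2 : ¬ Even (3 : ℤ) := by decide
      tauto
    obtain ⟨c, hc⟩ := h2
    exact ⟨c, by rw [hc]; ring⟩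
  have hLa : L = 2 * a' - 3 * M := by linarith
  have hN' : a' ^ 2 - a' * (3 * M) + (3 * M) ^ 2 = p := by
    rw [hLa] at h
    linarith
  have hra' : (a' : ZMod p) + ((3 * M : ℤ) : ZMod p) * r = 0 := by
    apply (mul_eq_zero.1 (?_ : (2 : ZMod p) * _ = 0)).resolve_left h2p
    have := congrArg (Int.cast : ℤ → ZMod p) ha'
    push_cast at this ⊢
    linear_combination hr6 - this
  obtain ⟨χ, hχ3, hχ1, hχ⟩ := EZ.exists_char p hp3 r hr
  obtain ⟨a, b, hJ⟩ : ∃ a b, jacobiSum χ χ = ⟨a, b⟩ := ⟨_, _, rfl⟩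
  obtain ⟨hb3, hN, hra⟩ := EZ.jacobi_props p hp3 r hr χ hχ3 hχ1 hχ a b hJ
  have huniq := EZ.uniq p hp hp3 a b a' (3 * M) r hN hN' hb3 (dvd_mul_right _ _) hra hra'
  -- the field of characteristic `q`
  obtain ⟨K, fK, aK, cK⟩ : ∃ (K : Type) (_ : Field K) (_ : IsAlgClosed K), CharP K q :=
    ⟨AlgebraicClosure (ZMod q), inferInstance, inferInstance,
      charP_of_injective_algebraMap (algebraMap (ZMod q) (AlgebraicClosure (ZMod q))).injective q⟩
  have hcast : ∀ k : ℤ, (k : K) = 0 ↔ (q : ℤ) ∣ k := fun k => CharP.intCast_eq_zero_iff K q k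
  have h2K : (2 : K) ≠ 0 := by
    have := (hcast 2).not.2 (fun hd => by have := Int.le_of_dvd (by norm_num) hd; omega)
    exact_mod_cast this
  have h3K : (3 : K) ≠ 0 := by
    have := (hcast 3).not.2 (fun hd => by have := Int.le_of_dvd (by norm_num) hd; omega)
    exact_mod_cast this
  have hpK : (p : K) ≠ 0 := by
    rw [Ne, CharP.cast_eq_zero_iff K q]
    intro hd
    exact hpq ((Nat.prime_dvd_prime_iff_eq hq hp).1 hd).symm
  have n3 : NeZero ((3 : ℕ) : K) := ⟨by exact_mod_cast h3K⟩
  obtain ⟨w, hwp⟩ := HasEnoughRootsOfUnity.exists_primitiveRoot K 3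
  have hw : w ^ 2 + w + 1 = 0 := by
    have := hwp.geom_sum_eq_zero (by norm_num)
    simp [Finset.sum_range_succ] at this
    linear_combination this
  have hw3 := EZ.cube hw
  have hw0 : w ≠ 0 := by rintro rfl; simp at hw3
  set s := 2 * w + 1 with hs
  have hs2 : s ^ 2 = -3 := by rw [hs]; linear_combination 4 * hw
  have hs0 : s ≠ 0 := by
    intro h0
    apply h3K
    rw [h0] at hs2
    linear_combination hs2
  have hqp : (q : ZMod p) ≠ 0 := by
    rw [Ne, ZMod.natCast_eq_zero_iff]
    intro hd
    exact hpq ((Nat.prime_dvd_prime_iff_eq hp hq).1 hd)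
  set c : K := EZ.phi w hw (χ q) with hc
  have hLHS : ((q : ZMod p) ^ ((p - 1) / 3) = r) ↔ c = w := by
    rw [← hχ q, hc]
    obtain ⟨k, hk3, hk⟩ := MulChar.exists_apply_eq_pow hχ3 EZ.om_prim hqp
    rw [hk, map_pow, map_pow, EZ.phi_om, EZ.phi_om]
    have aux : ∀ {A : Type} [CommRing A] [IsDomain A] (x : A), IsPrimitiveRoot x 3 →
        (x ^ k = x ↔ k = 1) := by
      intro A _ _ x hx
      constructor
      · intro hh
        exact hx.pow_inj hk3 (by norm_num) (by rw [hh, pow_one])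
      · rintro rfl
        exact pow_one x
    rw [aux r (EZ.prim hr h3p), aux w hwp]
  have hne : χ.ringHomComp (EZ.phi w hw) ≠ 1 := by
    intro hh
    apply hχ1
    apply MulChar.ext
    intro x
    obtain ⟨k, hk3, hk⟩ := MulChar.exists_apply_eq_pow hχ3 EZ.om_prim (a := (x : ZMod p)) x.ne_zero
    have h5 := congrArg (fun f => f (x : ZMod p)) hh
    simp only [MulChar.ringHomComp_apply, MulChar.one_apply_coe, hk, map_pow, EZ.phi_om] at h5
    have : k = 0 := hwp.pow_inj hk3 (by norm_num) (by rw [h5, pow_zero])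
    rw [hk, this, pow_zero, MulChar.one_apply_coe]
  obtain ⟨G1, G2⟩ := EZ.gauss_aux p q hpq (χ.ringHomComp (EZ.phi w hw))
    (by rw [MulChar.ringHomComp_pow, hχ3, MulChar.ringHomComp_one]) hne
  rw [jacobiSum_ringHomComp, hJ, MulChar.ringHomComp_apply, ← hc, EZ.phi_apply] at G1 G2
  simp only at G1 G2
  set J : K := a + b * w with hJdef
  set J' : K := a + b * w ^ 2 with hJcdef
  have hJJ : J * J' = p := by
    have := congrArg (Int.cast : ℤ → K) hN
    push_cast at this
    rw [← this, hJdef, hJcdef]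
    linear_combination (a * b : K) * hw + (b : K) ^ 2 * hw3
  have hJ0 : J ≠ 0 := by
    intro h0
    rw [h0, zero_mul] at hJJ
    exact hpK hJJ.symm
  have hJc0 : J' ≠ 0 := by
    intro h0
    rw [h0, mul_zero] at hJJ
    exact hpK hJJ.symm
  set v := J / J' with hv
  have hv0 : v ≠ 0 := div_ne_zero hJ0 hJc0
  -- rational points
  have hRHS : (∃ t : ℤ, (t ^ 3 - 3 * t ^ 2 - 9 * t + 3) * L ≡
        3 * (t ^ 3 + 9 * t ^ 2 - 9 * t - 9) * M [ZMOD (q : ℤ)]) ↔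
      ∃ t : K, t ^ q = t ∧ v * (t + s) ^ 3 = w * (t - s) ^ 3 := by
    have step : ∀ t : ℤ, ((t ^ 3 - 3 * t ^ 2 - 9 * t + 3) * L ≡
        3 * (t ^ 3 + 9 * t ^ 2 - 9 * t - 9) * M [ZMOD (q : ℤ)]) ↔
        v * ((t : K) + s) ^ 3 = w * (t - s) ^ 3 := by
      intro t
      rw [Int.modEq_iff_dvd, ← hcast, hv, div_mul_eq_mul_div, div_eq_iff hJc0, ← sub_eq_zero
        (a := J * _)]
      have hLK : (L : K) = 2 * a' - 3 * M := by
        rw [hLa]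
        push_cast
        ring
      have key : ∀ e : K, e ≠ 0 → J = e * (a' + 3 * M * w) → J' = e * (a' + 3 * M * w ^ 2) →
          ((((3 * (t ^ 3 + 9 * t ^ 2 - 9 * t - 9) * M -
            (t ^ 3 - 3 * t ^ 2 - 9 * t + 3) * L : ℤ)) : K) = 0 ↔
            J * ((t : K) + s) ^ 3 - w * (t - s) ^ 3 * J' = 0) := by
        intro e he h1 h2
        have hid : e * s * ((3 * (t ^ 3 + 9 * t ^ 2 - 9 * t - 9) * M -
            (t ^ 3 - 3 * t ^ 2 - 9 * t + 3) * L : ℤ) : K) =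
            (-2 * w) * (J * ((t : K) + s) ^ 3 - w * (t - s) ^ 3 * J') := by
          push_cast
          rw [h1, h2, hLK, hs]
          have hw2 : w ^ 2 = -1 - w := by linear_combination hw
          have hw4 : w ^ 4 = w := by linear_combination w * hw3
          have hw5 : w ^ 5 = -1 - w := by linear_combination w ^ 2 * hw3 + hw
          have hw6 : w ^ 6 = 1 := by linear_combination (w ^ 3 + 1) * hw3
          have hw7 : w ^ 7 = w := by linear_combination (w ^ 4 + w) * hw3
          ring_nf
          simp only [hw2, hw3, hw4, hw5, hw6, hw7]
          ring
        constructor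
        · intro h0
          rw [h0, mul_zero] at hid
          exact (mul_eq_zero.1 hid.symm).resolve_left (mul_ne_zero (neg_ne_zero.2 h2K) hw0)
        · intro h0
          rw [h0, mul_zero] at hid
          exact (mul_eq_zero.1 hid).resolve_left (mul_ne_zero he hs0)
      rcases huniq with ⟨h1, h2⟩ | ⟨h1, h2⟩
      · apply key 1 one_ne_zero
        · rw [hJdef, h1, h2]; push_cast; ring
        · rw [hJcdef, h1, h2]; push_cast; ring
      · apply key (-1) (neg_ne_zero.2 one_ne_zero)
        · rw [hJdef, h1, h2]; push_cast; ring
        · rw [hJcdef, h1, h2]; push_cast; ring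
    constructor
    · rintro ⟨t, ht⟩
      refine ⟨t, ?_, (step t).1 ht⟩
      rw [← Subfield.mem_bot_iff_pow_eq_self, mem_bot_iff_intCast q]
      exact ⟨t, rfl⟩
    · rintro ⟨t, ht, h5⟩
      rw [← Subfield.mem_bot_iff_pow_eq_self, mem_bot_iff_intCast q] at ht
      obtain ⟨k, rfl⟩ := ht
      exact ⟨k, (step k).2 h5⟩
  rw [hLHS, hRHS]
  clear_value s
  have hf : ∀ x : K, x ^ q = frobenius K q x := fun x => rfl
  rcases hq9 with h9 | h9
  · obtain ⟨m, hm⟩ : ∃ m, q = 3 * (3 * m + 1) + 1 := ⟨q / 9, by omega⟩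
    set n := 3 * m + 1 with hn
    have hwn : w ^ n = w := by rw [hn, pow_succ, pow_mul, hw3, one_pow, one_mul]
    have hfw : frobenius K q w = w := by
      rw [← hf, hm, pow_succ, pow_mul, hw3, one_pow, one_mul]
    have hfs : frobenius K q s = s := by
      rw [hs]; simp only [map_add, map_mul, hfw, map_one, map_ofNat]
    have hfix : ∀ x : K, x ≠ 0 → frobenius K q x = x → x ^ (3 * n) = 1 := by
      intro x hx hfx
      rw [← hf, hm, pow_succ] at hfx
      exact mul_right_cancel₀ hx (by rw [hfx, one_mul])
    have hJ3 : J ^ (3 * n) = 1 := by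
      apply hfix J hJ0
      rw [hJdef]; simp [hfw]
    rw [← EZ.slope_aux w hw h2K h3K s hs (fun t => t ^ q = t) n v hv0, hwn]
    · have hvn : v ^ n = c := by
        have h1 := G1 n hm
        rw [← hJJ] at h1
        rw [hv, div_pow, div_eq_iff (pow_ne_zero _ hJc0)]
        have h2 : J ^ n * ((J * J' * J) ^ n * c) = J ^ (3 * n) * (c * J' ^ n) := by
          rw [mul_pow, mul_pow]; ring
        rw [h1, hJ3, mul_one, one_mul] at h2
        exact h2
      rw [hvn]
    · intro t ht hp' hm'
      apply hfix _ (div_ne_zero hm' hp')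
      rw [map_div₀, map_sub, map_add, hfs, ← hf t, ht]
    · intro u hu1 hu0 hun
      have hfu : frobenius K q u = u := by rw [← hf, hm, pow_succ, hun, one_mul]
      rw [hf, map_div₀, map_sub, map_mul, map_add, hfs, map_one, hfu]
  · obtain ⟨m, hm⟩ : ∃ m, q + 1 = 3 * (3 * m + 2) := ⟨q / 9, by omega⟩
    set n := 3 * m + 2 with hn
    have hwn : w ^ n = w ^ 2 := by rw [hn, pow_add, pow_mul, hw3, one_pow, one_mul]
    have hfw : frobenius K q w = w ^ 2 := by
      have : q = 3 * (3 * m + 1) + 2 := by omega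
      rw [← hf, this, pow_add, pow_mul, hw3, one_pow, one_mul]
    have hfs : frobenius K q s = -s := by
      rw [hs]; simp only [map_add, map_mul, hfw, map_one, map_ofNat]
      linear_combination 2 * hw
    have hfix : ∀ x y : K, frobenius K q x = y → x ^ (3 * n) = x * y := by
      intro x y hfx
      rw [← hm, pow_succ, hf, hfx, mul_comm]
    have hJ3 : J ^ (3 * n) = J * J' := by
      apply hfix J
      rw [hJdef]; simp [hfw, hJcdef]
    rw [← EZ.slope_aux w hw h2K h3K s hs (fun t => t ^ q = t) n v hv0, hwn]
    · have hvn : v ^ n * c = 1 := by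
        have h1 := G2 n hm
        rw [← hJJ] at h1
        rw [hv, div_pow, div_mul_eq_mul_div, div_eq_iff (pow_ne_zero _ hJc0), one_mul]
        apply mul_left_cancel₀ (mul_ne_zero hJ0 hJc0)
        have h2 : J ^ n * (J * J' * J) ^ n = J ^ (3 * n) * J' ^ n := by
          rw [mul_pow, mul_pow]; ring
        rw [h1, hJ3] at h2
        rw [← h2]
        ring
      constructor
      · intro hcw
        rw [hcw] at hvn
        apply mul_right_cancel₀ hw0
        rw [hvn, ← hw3]
        ring
      · intro h5
        rw [h5] at hvn
        apply mul_left_cancel₀ (pow_ne_zero 2 hw0)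
        rw [hvn, ← hw3]
        ring
    · intro t ht hp' hm'
      rw [hfix ((t - s) / (t + s)) ((t + s) / (t - s))]
      · field_simp
      · rw [map_div₀, map_sub, map_add, hfs, ← hf t, ht]
        congr 1 <;> ring
    · intro u hu1 hu0 hun
      have hfu : frobenius K q u = u⁻¹ := by
        rw [← hm, pow_succ, hf] at hun
        exact eq_inv_of_mul_eq_one_left hun
      have hu1' : 1 - u ≠ 0 := sub_ne_zero.2 hu1.symm
      have hu1'' : u - 1 ≠ 0 := sub_ne_zero.2 hu1
      have hui : 1 - u⁻¹ ≠ 0 := by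
        rw [sub_ne_zero]
        intro h0
        exact hu1 (by rw [← inv_inv u, ← h0, inv_one])
      rw [hf, map_div₀, map_sub, map_mul, map_add, hfs, map_one, hfu, div_eq_div_iff hui hu1']
      field_simp
      ring
end

section
/- Let q be a prime with q ≡ 1 or 8 (mod 9), let p be a prime with p ≡ 1 (mod 3) and p ≠ q, and let L, M be integers with 4p = L² + 27M². Then q is a cubic residue modulo p if and only if there exists an integer t such that (t³ − 3t² − 9t + 3)·L ≡ −3(t³ + 9t² − 9t − 9)·M (mod q). -/
/-- The ring of Eisenstein integers. -/
abbrev Eis : Type := QuadraticAlgebra ℤ (-1) (-1)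

namespace Eis

lemma one_re' : (1 : Eis).re = 1 := rfl

lemma one_im' : (1 : Eis).im = 0 := rfl

lemma three_re' : (3 : Eis).re = 3 := rfl

lemma three_im' : (3 : Eis).im = 0 := rfl

instance : NoZeroDivisors Eis where
  eq_zero_or_eq_zero_of_mul_eq_zero := by
    have key : ∀ z : Eis, QuadraticAlgebra.norm z = 0 → z = 0 := by
      intro z hz
      rw [QuadraticAlgebra.norm_def] at hz
      have h1 : z.im ^ 2 = 0 := by nlinarith [sq_nonneg (2 * z.re - z.im), sq_nonneg z.im]
      have h2 : z.im = 0 := by simpa using h1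
      have h3 : z.re = 0 := by rw [h2] at hz; simpa using hz
      ext <;> simp [h2, h3]
    intro x y hxy
    have : QuadraticAlgebra.norm x * QuadraticAlgebra.norm y = 0 := by
      rw [← map_mul, hxy, QuadraticAlgebra.norm_zero]
    rcases mul_eq_zero.1 this with h | h
    · exact Or.inl (key _ h)
    · exact Or.inr (key _ h)

instance : Nontrivial Eis := ⟨⟨0, 1, fun h => by
  have := congrArg QuadraticAlgebra.re h
  simp [one_re'] at this⟩⟩

instance : IsDomain Eis := NoZeroDivisors.to_isDomain _

/-- The basic cube root of unity. -/
def w : Eis := ⟨0, 1⟩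

lemma w_sq : w ^ 2 + w + 1 = 0 := by
  rw [pow_two]; ext <;> simp [w, one_re', one_im']

lemma w_prim : IsPrimitiveRoot w 3 := by
  refine IsPrimitiveRoot.mk_of_lt _ (by norm_num) ?_ ?_
  · linear_combination (w - 1) * w_sq
  · intro l hl hl3 h
    interval_cases l
    · have := congrArg QuadraticAlgebra.re h
      simp [w, one_re', one_im'] at this
    · have := congrArg QuadraticAlgebra.im h
      rw [pow_two] at this
      simp [w, one_re', one_im'] at this

/-- The ring homomorphism attached to a root of `x²+x+1`. -/
lemma exists_hom {A : Type*} [CommRing A] (u : A) (hu : u ^ 2 + u + 1 = 0) :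
    ∃ f : Eis →+* A, ∀ a b : ℤ, f ⟨a, b⟩ = a + b * u := by
  let f : Eis →ₐ[ℤ] A := QuadraticAlgebra.lift ⟨u, by simp; linear_combination hu⟩
  refine ⟨f.toRingHom, fun a b => ?_⟩
  simp [f, QuadraticAlgebra.lift]

lemma exists_char (p : ℕ) [Fact p.Prime] (hp3 : p % 3 = 1) :
    ∃ (χ : MulChar (ZMod p) Eis) (a B : ℤ), orderOf χ = 3 ∧
      jacobiSum χ χ = ⟨a, 3 * B⟩ ∧ a ^ 2 - 3 * a * B + 9 * B ^ 2 = p := by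
  have hd : 3 ∣ Fintype.card (ZMod p) - 1 := by rw [ZMod.card]; omega
  obtain ⟨χ, hχ⟩ := MulChar.exists_mulChar_orderOf (ZMod p) hd w_prim
  have hχ3 : χ ^ 3 = 1 := by rw [← hχ]; exact pow_orderOf_eq_one χ
  obtain ⟨z, -, hz⟩ := exists_jacobiSum_eq_neg_one_add (by norm_num) hχ3 hχ3 hd w_prim
  have hz' : jacobiSum χ χ = -1 + z * (-3 * w) := by
    rw [hz]; linear_combination z * w_sq
  have hJ : ∃ a B : ℤ, jacobiSum χ χ = ⟨a, 3 * B⟩ := by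
    refine ⟨-1 + 3 * z.im, -z.re + z.im, ?_⟩
    rw [hz']
    obtain ⟨x, y⟩ := z
    ext
    · simp [w, one_re', one_im', three_re', three_im']; try ring
    · simp [w, one_re', one_im', three_re', three_im']; try ring
  obtain ⟨a, B, hJ⟩ := hJ
  refine ⟨χ, a, B, hχ, hJ, ?_⟩
  -- move to ℂ
  obtain ⟨u, hu⟩ : ∃ u : ℂ, IsPrimitiveRoot u 3 := ⟨_, Complex.isPrimitiveRoot_exp 3 (by norm_num)⟩
  have hu0 : u ^ 2 + u + 1 = 0 := by
    have h1 : u ^ 3 = 1 := hu.pow_eq_one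
    have h2 : u - 1 ≠ 0 := sub_ne_zero.2 (hu.ne_one (by norm_num))
    apply mul_left_cancel₀ h2; linear_combination h1
  have hu0' : (u ^ 2) ^ 2 + u ^ 2 + 1 = 0 := by linear_combination (u ^ 2 - u + 1) * hu0
  obtain ⟨f, hf⟩ := exists_hom u hu0
  obtain ⟨g, hg⟩ := exists_hom (u ^ 2) hu0'
  have hfw : f w = u := by simp [w, hf]
  have hgw : g w = u ^ 2 := by simp [w, hg]
  have hfi : Function.Injective f := by
    rw [injective_iff_map_eq_zero]
    rintro ⟨x, y⟩ hxy
    rw [hf] at hxy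
    have h1 : ((x ^ 2 - x * y + y ^ 2 : ℤ) : ℂ) = 0 := by
      push_cast; linear_combination (x + y * u ^ 2 : ℂ) * hxy + (-x * y - y ^ 2 * (u - 1)) * hu0
    have h1 : x ^ 2 - x * y + y ^ 2 = 0 := by exact_mod_cast h1
    have h2 : y = 0 := by
      have : y ^ 2 = 0 := by nlinarith [sq_nonneg (2 * x - y), sq_nonneg y]
      simpa using this
    subst h2
    have h3 : x = 0 := by simpa using h1
    subst h3; rfl
  have hfg : χ.ringHomComp g = (χ.ringHomComp f)⁻¹ := by
    rw [eq_comm, inv_eq_iff_mul_eq_one]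
    ext x
    obtain ⟨k, _, hk⟩ := MulChar.exists_apply_eq_pow hχ3 w_prim (x.ne_zero)
    have : u ^ 3 = 1 := hu.pow_eq_one
    simp only [MulChar.coeToFun_mul, Pi.mul_apply, MulChar.ringHomComp_apply, hk, map_pow, hfw, hgw, MulChar.one_apply_coe]
    rw [← mul_pow, show u * u ^ 2 = 1 by linear_combination this, one_pow]
  have hne : ∀ n, 0 < n → n < 3 → (χ.ringHomComp f) ^ n ≠ 1 := by
    intro n h0 h3 h
    rw [MulChar.ringHomComp_pow] at h
    have := (MulChar.ringHomComp_eq_one_iff hfi).1 h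
    have := orderOf_dvd_of_pow_eq_one this
    rw [hχ] at this
    exact absurd (Nat.le_of_dvd h0 this) (by omega)
  have hmul := jacobiSum_mul_jacobiSum_inv (F := ZMod p) (F' := ℂ) (χ := χ.ringHomComp f) (φ := χ.ringHomComp f)
    (by rw [ringChar.eq ℂ 0, ZMod.ringChar_zmod_n]; exact (Fact.out : p.Prime).ne_zero.symm)
    (by simpa using hne 1) (by simpa using hne 1) (by simpa [pow_two] using hne 2)
  rw [← hfg, jacobiSum_ringHomComp, jacobiSum_ringHomComp, hJ, hf, hg, ZMod.card] at hmul
  have : ((a ^ 2 - 3 * a * B + 9 * B ^ 2 : ℤ) : ℂ) = ((p : ℤ) : ℂ) := by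
    push_cast at hmul ⊢
    rw [← hmul]
    linear_combination (-3 * a * B - 9 * B ^ 2 * (u - 1)) * hu0
  exact_mod_cast this

end Eis

/-- Uniqueness of the representation `4p = L² + 27M²` up to signs. -/
lemma rep_unique (p : ℕ) (hp : p.Prime) (L M A B : ℤ)
    (h : (4 * p : ℤ) = L ^ 2 + 27 * M ^ 2) (h' : (4 * p : ℤ) = A ^ 2 + 27 * B ^ 2) :
    L ^ 2 = A ^ 2 ∧ M ^ 2 = B ^ 2 := by
  have hpp : Prime (p : ℤ) := Nat.prime_iff_prime_int.1 hp
  have hp0 : (0 : ℤ) < p := by exact_mod_cast hp.pos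
  have key : ∀ B : ℤ, (4 * p : ℤ) = A ^ 2 + 27 * B ^ 2 → (p : ℤ) ∣ L * B - A * M →
      L ^ 2 = A ^ 2 ∧ M ^ 2 = B ^ 2 := by
    rintro B h' ⟨k, hk⟩
    have h1 : 16 * (p : ℤ) ^ 2 = (L * A + 27 * M * B) ^ 2 + 27 * (L * B - A * M) ^ 2 := by
      linear_combination (4 * p : ℤ) * h + (L ^ 2 + 27 * M ^ 2) * h'
    rw [hk] at h1
    have hk0 : k = 0 := by
      by_contra hk0
      have : 1 ≤ k ^ 2 := by have := sq_pos_of_ne_zero hk0; omega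
      nlinarith [sq_nonneg (L * A + 27 * M * B), mul_pos hp0 hp0]
    rw [hk0, mul_zero] at hk
    have h2 : (4 * p : ℤ) * (B ^ 2 - M ^ 2) = 0 := by
      linear_combination (L * B + A * M) * hk + B ^ 2 * h - M ^ 2 * h'
    have h3 : B ^ 2 - M ^ 2 = 0 := by
      rcases mul_eq_zero.1 h2 with h | h
      · omega
      · exact h
    constructor <;> linarith
  have hd : (p : ℤ) ∣ (L * B - A * M) * (L * B + A * M) :=
    ⟨4 * (B ^ 2 - M ^ 2), by linear_combination -B ^ 2 * h + M ^ 2 * h'⟩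
  rcases hpp.dvd_or_dvd hd with h1 | h1
  · exact key B h' h1
  · have := key (-B) (by linear_combination h') (by
      rw [← dvd_neg]; convert h1 using 1; ring)
    simpa using this

/-- Rationality: an element fixed by Frobenius is an integer mod `q`. -/
lemma exists_int_of_pow_eq {F : Type*} [Field F] (q : ℕ) [Fact q.Prime] [CharP F q] (t : F)
    (ht : t ^ q = t) : ∃ n : ℤ, (n : F) = t := by
  by_contra hcon
  push Not at hcon
  let P : Polynomial F := Polynomial.X ^ q - Polynomial.X
  have hq1 : 1 < q := (Fact.out : q.Prime).one_lt
  have hP0 : P ≠ 0 := FiniteField.X_pow_card_sub_X_ne_zero F hq1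
  have hdeg : P.natDegree = q := FiniteField.X_pow_card_sub_X_natDegree_eq F hq1
  let f := ZMod.castHom (dvd_refl q) F
  have hf : Function.Injective f := f.injective
  classical
  let S : Finset F := insert t (Finset.univ.image f)
  have hnot : t ∉ Finset.univ.image f := by
    intro h
    obtain ⟨x, -, hx⟩ := Finset.mem_image.1 h
    apply hcon (x.val : ℤ)
    rw [← hx]
    conv_rhs => rw [← ZMod.natCast_zmod_val x, map_natCast]
    rw [Int.cast_natCast]
  have hc : S.card = q + 1 := by
    rw [Finset.card_insert_of_notMem hnot, Finset.card_image_of_injective _ hf, Finset.card_univ, ZMod.card]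
  have hS : S.val ⊆ P.roots := by
    intro x hx
    rw [Polynomial.mem_roots hP0]
    have hx : x ∈ S := hx
    rw [Finset.mem_insert] at hx
    rcases hx with rfl | hx
    · simp [P, ht]
    · obtain ⟨y, -, rfl⟩ := Finset.mem_image.1 hx
      simp only [P, Polynomial.IsRoot.def, Polynomial.eval_sub, Polynomial.eval_pow, Polynomial.eval_X]
      rw [← map_pow, ZMod.pow_card, sub_self]
  have := Polynomial.card_le_degree_of_subset_roots hS
  omega

lemma int_pow_q {F : Type*} [Field F] (q : ℕ) [Fact q.Prime] [CharP F q] (n : ℤ) : (n : F) ^ q = n := by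
  have := map_intCast (frobenius F q) n
  rwa [frobenius_def] at this

/-- The torus computation. -/
lemma slope_iff {F : Type*} [Field F] [IsAlgClosed F] (q k : ℕ) [Fact q.Prime] [CharP F q]
    (hq3 : (3 : F) ≠ 0) (hq2 : (2 : F) ≠ 0) (hk : q = 9 * k + 1 ∨ q + 1 = 9 * k) (w : F) (hw : w ^ 2 + w + 1 = 0)
    (L M : ℤ) (hLM : (L : F) ^ 2 + 27 * (M : F) ^ 2 ≠ 0) :
    (∃ t : ℤ, (t ^ 3 - 3 * t ^ 2 - 9 * t + 3) * L ≡
        -3 * (t ^ 3 + 9 * t ^ 2 - 9 * t - 9) * M [ZMOD (q : ℤ)]) ↔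
    ((L : F) + 3 * (2 * w + 1) * M) ^ (3 * k) = ((L : F) - 3 * (2 * w + 1) * M) ^ (3 * k) := by
  have hw3 : w ^ 3 = 1 := by linear_combination (w - 1) * hw
  obtain ⟨s, hs⟩ : ∃ s : F, s = 2 * w + 1 := ⟨_, rfl⟩
  rw [← hs]
  have hs2 : s ^ 2 = -3 := by rw [hs]; linear_combination 4 * hw
  have hs0 : s ≠ 0 := by rintro rfl; apply hq3; linear_combination hs2
  have hw0 : w ≠ 0 := by rintro rfl; simp at hw
  have hw1 : w ≠ 1 := by rintro rfl; apply hq3; linear_combination hw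
  have hprod : ((L : F) + 3 * s * M) * ((L : F) - 3 * s * M) ≠ 0 := by
    convert hLM using 1; linear_combination (-9 * M ^ 2 : F) * hs2
  have hP : (L : F) + 3 * s * M ≠ 0 := left_ne_zero_of_mul hprod
  have hQ : (L : F) - 3 * s * M ≠ 0 := right_ne_zero_of_mul hprod
  have hkpos : 0 < k := by have := (Fact.out : q.Prime).one_lt; omega
  -- Frobenius on s
  have hsq : (q = 9 * k + 1 ∧ s ^ q = s) ∨ (q + 1 = 9 * k ∧ s ^ q = -s) := by
    have h2q : (2 : F) ^ q = 2 := by exact_mod_cast int_pow_q (F := F) q 2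
    have e : s ^ q = 2 * w ^ q + 1 := by
      rw [hs, add_pow_char, mul_pow, h2q, one_pow]
    rcases hk with h | h
    · left; refine ⟨h, ?_⟩
      rw [e, show q = 3 * (3 * k) + 1 by omega, pow_succ, pow_mul, hw3, hs]; ring
    · right; refine ⟨h, ?_⟩
      rw [e, show q = 3 * (3 * k - 1) + 2 by omega, pow_add, pow_mul, hw3, hs]
      linear_combination 2 * hw
  have hcong : ∀ t : ℤ, ((t ^ 3 - 3 * t ^ 2 - 9 * t + 3) * L ≡
        -3 * (t ^ 3 + 9 * t ^ 2 - 9 * t - 9) * M [ZMOD (q : ℤ)]) ↔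
        ((L : F) + 3 * s * M) * (w ^ 2 * (t - s) ^ 3) = ((L : F) - 3 * s * M) * (w * (t + s) ^ 3) := by
    intro t
    rw [← CharP.intCast_eq_intCast F q]
    push_cast
    have h2w : w = (s - 1) / 2 := by rw [hs]; field_simp; ring
    rw [← sub_eq_zero, ← sub_eq_zero (b := ((L : F) - 3 * s * M) * (w * (t + s) ^ 3))]
    have e : ((L : F) + 3 * s * M) * (w ^ 2 * (t - s) ^ 3) - ((L : F) - 3 * s * M) * (w * (t + s) ^ 3)
       = -s * ((t ^ 3 - 3 * t ^ 2 - 9 * t + 3) * L - -3 * (t ^ 3 + 9 * t ^ 2 - 9 * t - 9) * M) := by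
      have e1 : w ^ 2 = (-1 - s) / 2 := by field_simp; rw [hs]; linear_combination 2 * hw
      rw [e1, h2w]
      have hs3 : s ^ 3 = -3 * s := by linear_combination s * hs2
      have hs5 : s ^ 5 = 9 * s := by linear_combination s * (s ^ 2 - 3) * hs2
      field_simp
      ring_nf
      simp only [hs3, hs5]
      ring
    rw [e, mul_eq_zero, or_iff_right (neg_ne_zero.2 hs0)]
  constructor
  · rintro ⟨t, ht⟩
    rw [hcong] at ht
    have htms : (t : F) - s ≠ 0 := by
      intro h0
      rw [h0] at ht
      have : ((L : F) - 3 * s * M) * (w * (t + s) ^ 3) = 0 := by rw [← ht]; ring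
      have h3 : (t + s : F) = 0 := by simpa [hQ, hw0] using this
      have : 2 * s = 0 := by linear_combination h3 - h0
      simp [hq2, hs0] at this
    have htps : (t : F) + s ≠ 0 := by
      intro h0
      rw [h0] at ht
      have : ((L : F) + 3 * s * M) * (w ^ 2 * (t - s) ^ 3) = 0 := by rw [ht]; ring
      simp [hP, hw0, htms] at this
    have hpow : ((t : F) - s) ^ (9 * k) = (t + s) ^ (9 * k) := by
      rcases hsq with ⟨h, hs'⟩ | ⟨h, hs'⟩
      · have a1 : ((t : F) - s) ^ (9 * k) = 1 := by
          apply mul_right_cancel₀ htms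
          rw [← pow_succ, ← h, sub_pow_char, hs', int_pow_q, one_mul]
        have a2 : ((t : F) + s) ^ (9 * k) = 1 := by
          apply mul_right_cancel₀ htps
          rw [← pow_succ, ← h, add_pow_char, hs', int_pow_q, one_mul]
        rw [a1, a2]
      · rw [← h, pow_succ, pow_succ, sub_pow_char, add_pow_char, hs', int_pow_q]; ring
    have := congrArg (· ^ (3 * k)) ht
    simp only [mul_pow, ← pow_mul] at this
    rw [show 3 * (3 * k) = 9 * k by ring, hpow, show 2 * (3 * k) = 3 * (2 * k) by ring, pow_mul w 3, pow_mul w 3,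
      hw3, one_pow, one_pow, one_mul] at this
    exact mul_right_cancel₀ (pow_ne_zero _ htps) this
  · intro hU
    obtain ⟨U, hUd⟩ : ∃ U : F, U = (L + 3 * s * M) / (L - 3 * s * M) := ⟨_, rfl⟩
    have hUk : U ^ (3 * k) = 1 := by
      rw [hUd, div_pow, hU, div_self (pow_ne_zero _ hQ)]
    have hU0 : U ≠ 0 := by rw [hUd]; exact div_ne_zero hP hQ
    obtain ⟨v, hv, hv1⟩ : ∃ v : F, v ^ 3 = U * w ∧ v ≠ 1 := by
      obtain ⟨v, hv⟩ := IsAlgClosed.exists_pow_nat_eq (U * w) (n := 3) (by norm_num)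
      by_cases h : v = 1
      · refine ⟨w, ?_, hw1⟩
        rw [← hv, h, hw3, one_pow]
      · exact ⟨v, hv, h⟩
    have hv0 : v ≠ 0 := by rintro rfl; simp [hU0, hw0] at hv
    have hv9 : v ^ (9 * k) = 1 := by
      rw [show 9 * k = 3 * (3 * k) by ring, pow_mul, hv, mul_pow, hUk, pow_mul, hw3]; simp
    have hv1' : v - 1 ≠ 0 := sub_ne_zero.2 hv1
    obtain ⟨T, hT⟩ : ∃ T : F, T = s * (v + 1) / (v - 1) := ⟨_, rfl⟩
    have hTq : T ^ q = T := by
      rw [hT, div_pow, mul_pow, add_pow_char, sub_pow_char, one_pow]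
      rcases hsq with ⟨h, hs'⟩ | ⟨h, hs'⟩
      · rw [hs', h, pow_succ, hv9, one_mul]
      · have : v ^ q = v⁻¹ := by
          apply mul_right_cancel₀ hv0
          rw [← pow_succ, h, hv9, inv_mul_cancel₀ hv0]
        have h1v : 1 - v ≠ 0 := by rw [← neg_sub]; exact neg_ne_zero.2 hv1'
        have h2v : v⁻¹ - 1 ≠ 0 := by
          intro h0; apply h1v; field_simp at h0; simpa using h0
        rw [hs', this, div_eq_div_iff h2v hv1']
        field_simp
        ring
    obtain ⟨t, ht⟩ := exists_int_of_pow_eq q T hTq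
    refine ⟨t, (hcong t).2 ?_⟩
    rw [ht, hT]
    have hPU : (L + 3 * s * M : F) = U * (L - 3 * s * M) := by rw [hUd]; field_simp
    rw [hPU]
    have e1 : s * (v + 1) / (v - 1) - s = 2 * s / (v - 1) := by field_simp; ring
    have e2 : s * (v + 1) / (v - 1) + s = v * (2 * s / (v - 1)) := by field_simp; ring
    rw [e1, e2, mul_pow v, hv]
    ring

/-- Cubic residues are detected by a cubic character. -/
lemma cubic_char_iff (p : ℕ) [Fact p.Prime] {R : Type*} [CommRing R]
    (χ : MulChar (ZMod p) R) (hχ : orderOf χ = 3) (y : ZMod p) (hy : y ≠ 0) :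
    (∃ x : ZMod p, x ^ 3 = y) ↔ χ y = 1 := by
  have hχ3 : χ ^ 3 = 1 := by rw [← hχ]; exact pow_orderOf_eq_one χ
  have hcube : ∀ x : (ZMod p)ˣ, χ x ^ 3 = 1 := by
    intro x
    rw [← MulChar.pow_apply_coe, hχ3, MulChar.one_apply_coe]
  constructor
  · rintro ⟨x, rfl⟩
    have hx : x ≠ 0 := by rintro rfl; simp at hy
    rw [map_pow]
    exact hcube (Units.mk0 x hx)
  · intro h
    obtain ⟨g, hg⟩ := IsCyclic.exists_generator (α := (ZMod p)ˣ)
    obtain ⟨n, hn⟩ := (mem_powers_iff_mem_zpowers.2 (hg (Units.mk0 y hy)))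
    have hn : g ^ n = Units.mk0 y hy := hn
    have hyn : y = (g : ZMod p) ^ n := by rw [← Units.val_pow_eq_pow_val, hn]; rfl
    have hg1 : χ g ≠ 1 := by
      intro h1
      have : χ = 1 := by
        ext x
        obtain ⟨m, hm⟩ := (mem_powers_iff_mem_zpowers.2 (hg x))
        have hm : g ^ m = x := hm
        rw [← hm, Units.val_pow_eq_pow_val, map_pow, h1, one_pow, ← Units.val_pow_eq_pow_val, MulChar.one_apply_coe]
      rw [this, orderOf_one] at hχ
      omega
    have ho : orderOf (χ g) = 3 := orderOf_eq_prime (hcube g) hg1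
    rw [hyn, map_pow] at h
    have hd := orderOf_dvd_of_pow_eq_one h
    rw [ho] at hd
    obtain ⟨m, rfl⟩ := hd
    exact ⟨(g : ZMod p) ^ m, by rw [hyn]; ring⟩

/-- The reciprocity law at the level of the residue field. -/
lemma char_iff_pow {F : Type*} [Field F] [IsAlgClosed F] (q k p : ℕ) [Fact q.Prime] [Fact p.Prime] [CharP F q]
    (hpq : p ≠ q) (χ : MulChar (ZMod p) F) (hχ : orderOf χ = 3)
    (J J' : F) (hJ : jacobiSum χ χ = J) (hJJ : J * J' = p)
    (hJq : (q = 3 * k + 1 ∧ J ^ q = J) ∨ (q + 1 = 3 * k ∧ J ^ q = J')) :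
    χ (q : ZMod p) = 1 ↔ J ^ k = J' ^ k := by
  have hχ3 : χ ^ 3 = 1 := by rw [← hχ]; exact pow_orderOf_eq_one χ
  have hχ1 : χ ≠ 1 := by rintro rfl; simp at hχ
  have hp : p.Prime := Fact.out
  have hq : q.Prime := Fact.out
  have hpF : (p : F) ≠ 0 := by
    intro h
    rw [CharP.cast_eq_zero_iff F q] at h
    exact hpq ((Nat.prime_dvd_prime_iff_eq hq hp).1 h).symm
  have hqp : (q : ZMod p) ≠ 0 := by
    intro h
    rw [CharP.cast_eq_zero_iff (ZMod p) p] at h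
    exact hpq ((Nat.prime_dvd_prime_iff_eq hp hq).1 h)
  have hJ0 : J ≠ 0 := by rintro rfl; simp at hJJ; exact hpF hJJ.symm
  have hneg : χ (-1) = 1 := by
    rw [← cubic_char_iff p χ hχ (-1) (by simp)]
    exact ⟨-1, by ring⟩
  have : NeZero (p : F) := ⟨hpF⟩
  have : NeZero p := ⟨hp.ne_zero⟩
  obtain ⟨ζ, hζ⟩ := HasEnoughRootsOfUnity.exists_primitiveRoot F p
  let ψ : AddChar (ZMod p) F := AddChar.zmodChar p hζ.pow_eq_one
  have hψ : ψ.IsPrimitive := AddChar.zmodChar_primitive_of_primitive_root p hζ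
  obtain ⟨G, hG⟩ : ∃ G, G = gaussSum χ ψ := ⟨_, rfl⟩
  have hG0 : G ≠ 0 := by
    rw [hG]; exact gaussSum_ne_zero_of_nontrivial (by rwa [ZMod.card]) hχ1 hψ
  have hG3 : G ^ 3 = J ^ 2 * J' := by
    have := gaussSum_pow_eq_prod_jacobiSum (χ := χ) (ψ := ψ) (by omega) hψ
    rw [hχ, ← hG, hneg, ZMod.card] at this
    simp [hJ] at this
    rw [this, ← hJJ]; ring
  have hGG : G * gaussSum (χ ^ 2) ψ = J * J' := by
    have := gaussSum_mul_gaussSum_pow_orderOf_sub_one (χ := χ) (ψ := ψ) hχ1 hψ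
    rw [hχ, ← hG, hneg, ZMod.card] at this
    rw [hJJ]; simpa using this
  have hfrob : (χ ^ q) (q : ZMod p) * G ^ q = gaussSum (χ ^ q) ψ := by
    rw [hG, gaussSum_frob, AddChar.pow_mulShift]
    exact gaussSum_mulShift (χ ^ q) ψ (Units.mk0 (q : ZMod p) hqp)
  obtain ⟨c, hc, hcu⟩ : ∃ c : F, c * (J ^ 2 * J') ^ k = J ^ (3 * k) ∧ (χ (q : ZMod p) = 1 ↔ c = 1) := by
    rcases hJq with ⟨h, hj⟩ | ⟨h, hj⟩
    · have hχq : χ ^ q = χ := by rw [h, pow_succ, pow_mul, hχ3, one_pow, one_mul]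
      rw [hχq, ← hG] at hfrob
      refine ⟨χ (q : ZMod p), ?_, Iff.rfl⟩
      have h1 : J ^ (3 * k) = 1 := by
        apply mul_right_cancel₀ hJ0
        rw [← pow_succ, ← h, hj, one_mul]
      rw [h1, ← hG3, ← pow_mul]
      apply mul_right_cancel₀ hG0
      rw [mul_assoc, ← pow_succ, ← h, hfrob, one_mul]
    · have hk0 : 0 < k := by omega
      have hχq : χ ^ q = χ ^ 2 := by
        rw [show q = 3 * (k - 1) + 2 by omega, pow_add, pow_mul, hχ3, one_pow, one_mul]
      rw [hχq] at hfrob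
      refine ⟨(χ ^ 2) (q : ZMod p), ?_, ?_⟩
      · rw [← hG3, ← pow_mul, ← h, pow_succ J, pow_succ G, hj, mul_comm J', ← hGG, ← hfrob]
        ring
      · have h3 : χ (q : ZMod p) ^ 3 = 1 := by
          rw [← MulChar.pow_apply' _ (by norm_num), hχ3, MulChar.one_apply (isUnit_iff_ne_zero.2 hqp)]
        rw [MulChar.pow_apply' _ (by norm_num)]
        constructor
        · intro h; rw [h, one_pow]
        · intro h; rw [pow_succ, h, one_mul] at h3; exact h3
  rw [hcu]
  have hJ'0 : J' ≠ 0 := by rintro rfl; simp at hJJ; exact hpF hJJ.symm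
  have e : (J ^ 2 * J') ^ k = J ^ (2 * k) * J' ^ k := by rw [mul_pow, pow_mul]
  have e3 : J ^ (3 * k) = J ^ (2 * k) * J ^ k := by rw [← pow_add]; congr 1; ring
  rw [e, e3] at hc
  constructor
  · rintro rfl
    rw [one_mul] at hc
    exact (mul_left_cancel₀ (pow_ne_zero _ hJ0) hc).symm
  · intro h
    rw [h] at hc
    apply mul_right_cancel₀ (mul_ne_zero (pow_ne_zero (2 * k) hJ0) (pow_ne_zero k hJ'0))
    rw [hc, one_mul]

/-- The main theorem, relative to an algebraically closed field of characteristic `q`. -/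
lemma main_aux (F : Type*) [Field F] [IsAlgClosed F] (q p : ℕ) [CharP F q] (hq : q.Prime)
    (hq9 : q % 9 = 1 ∨ q % 9 = 8)
    (hp : p.Prime) (hp3 : p % 3 = 1) (hpq : p ≠ q)
    (L M : ℤ) (h : (4 * p : ℤ) = L ^ 2 + 27 * M ^ 2) :
    (∃ x : ℤ, x ^ 3 ≡ (q : ℤ) [ZMOD (p : ℤ)]) ↔
      ∃ t : ℤ, (t ^ 3 - 3 * t ^ 2 - 9 * t + 3) * L ≡
        -3 * (t ^ 3 + 9 * t ^ 2 - 9 * t - 9) * M [ZMOD (q : ℤ)] := by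
  have : Fact p.Prime := ⟨hp⟩
  have : Fact q.Prime := ⟨hq⟩
  obtain ⟨k, hk⟩ : ∃ k, q = 9 * k + 1 ∨ q + 1 = 9 * k := by
    rcases hq9 with h | h
    · exact ⟨q / 9, by omega⟩
    · exact ⟨q / 9 + 1, by omega⟩
  have hcast : ∀ n : ℕ, n.Prime → n ≠ q → (n : F) ≠ 0 := by
    intro n hn hnq h0
    rw [CharP.cast_eq_zero_iff F q] at h0
    exact hnq ((Nat.prime_dvd_prime_iff_eq hq hn).1 h0).symm
  have h3F : (3 : F) ≠ 0 := by exact_mod_cast hcast 3 Nat.prime_three (by omega)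
  have h2F : (2 : F) ≠ 0 := by exact_mod_cast hcast 2 Nat.prime_two (by omega)
  have hpF : (p : F) ≠ 0 := hcast p hp hpq
  have : NeZero ((3 : ℕ) : F) := ⟨by exact_mod_cast h3F⟩
  obtain ⟨w, hwp⟩ := HasEnoughRootsOfUnity.exists_primitiveRoot F 3
  have hw3 : w ^ 3 = 1 := hwp.pow_eq_one
  have hw : w ^ 2 + w + 1 = 0 := by
    have h2 : w - 1 ≠ 0 := sub_ne_zero.2 (hwp.ne_one (by norm_num))
    apply mul_left_cancel₀ h2; linear_combination hw3
  have h4F : (4 * p : F) = (L : F) ^ 2 + 27 * (M : F) ^ 2 := by exact_mod_cast congrArg (Int.cast : ℤ → F) h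
  have hLM : (L : F) ^ 2 + 27 * (M : F) ^ 2 ≠ 0 := by
    rw [← h4F, show (4 : F) = 2 * 2 by norm_num]
    exact mul_ne_zero (mul_ne_zero h2F h2F) hpF
  rw [slope_iff (F := F) q k h3F h2F hk w hw L M hLM]
  obtain ⟨χ₀, a, B, hχ₀, hJ₀, hN⟩ := Eis.exists_char p hp3
  obtain ⟨f, hf⟩ := Eis.exists_hom w hw
  let χ := χ₀.ringHomComp f
  have hfw : f Eis.w = w := by simp [Eis.w, hf]
  have hχ₃ : χ₀ ^ 3 = 1 := by rw [← hχ₀]; exact pow_orderOf_eq_one χ₀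
  have hχ : orderOf χ = 3 := by
    apply orderOf_eq_prime
    · rw [MulChar.ringHomComp_pow, hχ₃, MulChar.ringHomComp_one]
    · intro h1
      have : χ₀ = 1 := by
        refine MulChar.ext fun x => ?_
        obtain ⟨n, hn3, hn⟩ := MulChar.exists_apply_eq_pow hχ₃ Eis.w_prim x.ne_zero
        have h2 : f (χ₀ x) = 1 := by
          rw [← MulChar.ringHomComp_apply]
          change χ x = 1
          rw [h1, MulChar.one_apply_coe]
        rw [hn, map_pow, hfw] at h2
        have h3 := (hwp.pow_eq_one_iff_dvd n).1 h2
        rw [hn, MulChar.one_apply_coe]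
        exact (Eis.w_prim.pow_eq_one_iff_dvd n).2 h3
      rw [this, orderOf_one] at hχ₀
      omega
  obtain ⟨J, hJ⟩ : ∃ J : F, J = a + 3 * B * w := ⟨_, rfl⟩
  obtain ⟨J', hJ'⟩ : ∃ J' : F, J' = a + 3 * B * w ^ 2 := ⟨_, rfl⟩
  have hJac : jacobiSum χ χ = J := by
    rw [jacobiSum_ringHomComp, hJ₀, hf, hJ]; push_cast; ring
  have hNF : (a : F) ^ 2 - 3 * a * B + 9 * B ^ 2 = p := by
    exact_mod_cast congrArg (Int.cast : ℤ → F) hN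
  have hJJ : J * J' = p := by
    rw [hJ, hJ', ← hNF]
    linear_combination (3 * a * B + 9 * B ^ 2 * (w - 1) : F) * hw
  have hJq : (q = 3 * (3 * k) + 1 ∧ J ^ q = J) ∨ (q + 1 = 3 * (3 * k) ∧ J ^ q = J') := by
    have e : J ^ q = a + 3 * B * w ^ q := by
      have h3q := int_pow_q (F := F) q (3 * B)
      push_cast at h3q
      rw [hJ, add_pow_char, mul_pow, h3q, int_pow_q]
    have hq1 := hq.one_lt
    rcases hk with h | h
    · left; refine ⟨by omega, ?_⟩
      rw [e, show q = 3 * (3 * k) + 1 by omega, pow_succ, pow_mul, hw3, hJ]; ring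
    · right; refine ⟨by omega, ?_⟩
      rw [e, show q = 3 * (3 * k - 1) + 2 by omega, pow_add, pow_mul, hw3, hJ']; ring
  have hqp : (q : ZMod p) ≠ 0 := by
    intro h
    rw [CharP.cast_eq_zero_iff (ZMod p) p] at h
    exact hpq ((Nat.prime_dvd_prime_iff_eq hp hq).1 h)
  have hres : (∃ x : ℤ, x ^ 3 ≡ (q : ℤ) [ZMOD (p : ℤ)]) ↔ ∃ x : ZMod p, x ^ 3 = (q : ZMod p) := by
    constructor
    · rintro ⟨x, hx⟩
      refine ⟨(x : ZMod p), ?_⟩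
      have := (ZMod.intCast_eq_intCast_iff _ _ p).2 hx
      exact_mod_cast this
    · rintro ⟨x, hx⟩
      obtain ⟨y, rfl⟩ := ZMod.intCast_surjective x
      refine ⟨y, (ZMod.intCast_eq_intCast_iff _ _ p).1 ?_⟩
      exact_mod_cast hx
  rw [hres, cubic_char_iff p χ hχ _ hqp, char_iff_pow q (3 * k) p hpq χ hχ J J' hJac hJJ hJq]
  -- compare `(L, M)` with `(A, B)`
  have h4 : (4 * p : ℤ) = (2 * a - 3 * B) ^ 2 + 27 * B ^ 2 := by rw [← hN]; ring
  obtain ⟨hL, hM⟩ := rep_unique p hp L M (2 * a - 3 * B) B h h4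
  have e1 : (2 * J) = ((2 * a - 3 * B : ℤ) : F) + 3 * (2 * w + 1) * B := by
    rw [hJ]; push_cast; ring
  have e2 : (2 * J') = ((2 * a - 3 * B : ℤ) : F) - 3 * (2 * w + 1) * B := by
    rw [hJ']; push_cast; linear_combination (6 * B : F) * hw
  have hscale : J ^ (3 * k) = J' ^ (3 * k) ↔ (2 * J) ^ (3 * k) = (2 * J') ^ (3 * k) := by
    rw [mul_pow, mul_pow, mul_right_inj' (pow_ne_zero _ h2F)]
  rw [hscale, e1, e2]
  have hneg : ∀ x y : F, (-x) ^ (3 * k) = (-y) ^ (3 * k) ↔ x ^ (3 * k) = y ^ (3 * k) := by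
    intro x y
    rw [neg_pow, neg_pow y, mul_right_inj' (pow_ne_zero _ (neg_ne_zero.2 one_ne_zero))]
  rcases sq_eq_sq_iff_eq_or_eq_neg.1 hL with hL | hL <;>
    rcases sq_eq_sq_iff_eq_or_eq_neg.1 hM with hM | hM <;> rw [hL, hM]
  · rw [eq_comm (a := _ ^ (3 * k))]
    push_cast
    rw [mul_neg, ← sub_eq_add_neg, sub_neg_eq_add]
  · rw [← hneg, eq_comm (a := _ ^ (3 * k))]
    push_cast
    ring_nf
  · rw [← hneg]
    push_cast
    ring_nf

/-- For a prime `q ≡ ±1 (mod 9)` and a prime `p ≡ 1 (mod 3)`, `p ≠ q`, with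
`4p = L² + 27M²`: `q` is a cubic residue mod `p` iff
`(t³−3t²−9t+3)L ≡ −3(t³+9t²−9t−9)M (mod q)` for some integer `t`. -/
theorem one_mod_nine_cubic_residue (q p : ℕ) (hq : q.Prime)
    (hq9 : q % 9 = 1 ∨ q % 9 = 8)
    (hp : p.Prime) (hp3 : p % 3 = 1) (hpq : p ≠ q)
    (L M : ℤ) (h : (4 * p : ℤ) = L ^ 2 + 27 * M ^ 2) :
    (∃ x : ℤ, x ^ 3 ≡ (q : ℤ) [ZMOD (p : ℤ)]) ↔
      ∃ t : ℤ, (t ^ 3 - 3 * t ^ 2 - 9 * t + 3) * L ≡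
        -3 * (t ^ 3 + 9 * t ^ 2 - 9 * t - 9) * M [ZMOD (q : ℤ)] := by
  have : Fact q.Prime := ⟨hq⟩
  have : CharP (AlgebraicClosure (ZMod q)) q :=
    charP_of_injective_algebraMap (algebraMap (ZMod q) (AlgebraicClosure (ZMod q))).injective q
  exact main_aux (AlgebraicClosure (ZMod q)) q p hq hq9 hp hp3 hpq L M h
end

section
/- Let F be a field, let C, D, t ∈ F with t ≠ −1, and set s = (t − 3)·(t + 1)⁻¹. Then (D·t³ − C·t² − 9D·t + C)·(C·s³ + 27D·s² − 9C·s − 27D) = (D·s³ − C·s² − 9D·s + C)·(C·t³ + 27D·t² − 9C·t − 27D). -/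
/-- Cross-multiplied invariance of `g_γ` under the order-three map `t ↦ (t−3)/(t+1)`. -/
theorem g_gamma_invariance (F : Type*) [Field F] (C D t : F) (ht : t ≠ -1)
    (s : F) (hs : s = (t - 3) * (t + 1)⁻¹) :
    (D * t ^ 3 - C * t ^ 2 - 9 * D * t + C) *
        (C * s ^ 3 + 27 * D * s ^ 2 - 9 * C * s - 27 * D) =
      (D * s ^ 3 - C * s ^ 2 - 9 * D * s + C) *
        (C * t ^ 3 + 27 * D * t ^ 2 - 9 * C * t - 27 * D) := by
  have h1 : t + 1 ≠ 0 := fun h => ht (eq_neg_of_add_eq_zero_left h)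
  have key : (t ^ 3 - 9 * t) * (s ^ 2 - 1) = (s ^ 3 - 9 * s) * (t ^ 2 - 1) := by
    subst hs
    field_simp
    ring
  linear_combination (27 * D ^ 2 + C ^ 2) * key
end

section
/- Let q be a prime with q ≥ 5 and q ≡ 2 (mod 3). Then the set {m ∈ ℤ/qℤ : there exists t ∈ ℤ/qℤ with t³ − 9t ≠ 0 and t² − 1 = m·(t³ − 9t)} has exactly (q − 2)/3 elements. -/
/-- `-3` is not a square modulo a prime `q ≡ 2 (mod 3)`. -/
lemma lehmer_aux_sq (q : ℕ) [Fact q.Prime] (hq3 : q % 3 = 2)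
    (h2 : (2 : ZMod q) ≠ 0) (h3 : (3 : ZMod q) ≠ 0) (t : ZMod q) : t ^ 2 + 3 ≠ 0 := by
  intro h
  set w : ZMod q := (t - 1) / 2 with hw
  have hw3 : w ^ 3 = 1 := by
    rw [hw, div_pow, div_eq_one_iff_eq (pow_ne_zero _ h2)]
    linear_combination (t - 3) * h
  have hw0 : w ≠ 0 := by
    intro h0
    rw [h0] at hw3
    norm_num at hw3
  have hf := ZMod.pow_card_sub_one_eq_one hw0
  obtain ⟨k, hk⟩ : ∃ k, q - 1 = 3 * k + 1 := ⟨q / 3, by omega⟩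
  rw [hk, pow_succ, pow_mul, hw3, one_pow, one_mul, hw, div_eq_one_iff_eq h2] at hf
  have ht : t = 3 := by linear_combination hf
  rw [ht] at h
  have : (2 : ZMod q) * 2 * 3 = 0 := by linear_combination h
  simp_all

/-- For a prime `q ≥ 5` with `q ≡ 2 (mod 3)`, the affine image of Lehmer's rational
function `g(t) = (t²−1)/(t³−9t)` over `ZMod q` has exactly `(q−2)/3` elements. -/
theorem lehmer_slope_count (q : ℕ) (hq : q.Prime) (hq5 : 5 ≤ q) (hq3 : q % 3 = 2) :
    {m : ZMod q | ∃ t : ZMod q, t ^ 3 - 9 * t ≠ 0 ∧ t ^ 2 - 1 = m * (t ^ 3 - 9 * t)}.ncard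
      = (q - 2) / 3 := by
  haveI : Fact q.Prime := ⟨hq⟩
  have hn : ∀ n : ℕ, 0 < n → n < 5 → ((n : ℕ) : ZMod q) ≠ 0 := by
    intro n h0 h5 h
    rw [ZMod.natCast_eq_zero_iff] at h
    have := Nat.le_of_dvd h0 h
    omega
  have h2 : (2 : ZMod q) ≠ 0 := by exact_mod_cast hn 2 (by norm_num) (by norm_num)
  have h3 : (3 : ZMod q) ≠ 0 := by exact_mod_cast hn 3 (by norm_num) (by norm_num)
  have h4 : (4 : ZMod q) ≠ 0 := by exact_mod_cast hn 4 (by norm_num) (by norm_num)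
  have hsq := lehmer_aux_sq q hq3 h2 h3
  classical
  set B : Finset (ZMod q) := {0, 1, -1, 3, -3} with hB
  have hBc : B.card = 5 := by
    rw [hB]
    have e1 : (1 : ZMod q) ≠ -1 := fun h => h2 (by linear_combination h)
    have e2 : (1 : ZMod q) ≠ 3 := fun h => h2 (by linear_combination -h)
    have e3 : (1 : ZMod q) ≠ -3 := fun h => h4 (by linear_combination h)
    have e4 : (-1 : ZMod q) ≠ 3 := fun h => h4 (by linear_combination -h)
    have e5 : (-1 : ZMod q) ≠ -3 := fun h => h2 (by linear_combination h)
    have e6 : (3 : ZMod q) ≠ -3 := fun h => mul_ne_zero h2 h3 (by linear_combination h)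
    have e7 : (0 : ZMod q) ≠ 3 := h3.symm
    have e8 : (0 : ZMod q) ≠ -3 := fun h => h3 (by linear_combination h)
    have e9 : (0 : ZMod q) ≠ -1 := fun h => one_ne_zero (α := ZMod q) (by linear_combination h)
    have e10 : (0 : ZMod q) ≠ 1 := zero_ne_one
    repeat rw [Finset.card_insert_of_notMem (by
      simp only [Finset.mem_insert, Finset.mem_singleton, not_or]
      tauto)]
    simp
  set D : Finset (ZMod q) := Bᶜ with hD
  have hDc : D.card = q - 5 := by
    rw [hD, Finset.card_compl, hBc, ZMod.card]
  have hDm : ∀ t, t ∈ D ↔ t ^ 3 - 9 * t ≠ 0 ∧ t - 1 ≠ 0 ∧ t + 1 ≠ 0 := by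
    intro t
    have hf : t ^ 3 - 9 * t = t * ((t - 3) * (t + 3)) := by ring
    rw [hf, mul_ne_zero_iff, mul_ne_zero_iff, hD, hB]
    simp only [Finset.mem_compl, Finset.mem_insert, Finset.mem_singleton, not_or, ne_eq,
      sub_eq_zero, add_eq_zero_iff_eq_neg]
    tauto
  set g : ZMod q → ZMod q := fun t => (t ^ 2 - 1) / (t ^ 3 - 9 * t) with hg
  have hset : {m : ZMod q | ∃ t : ZMod q, t ^ 3 - 9 * t ≠ 0 ∧ t ^ 2 - 1 = m * (t ^ 3 - 9 * t)}
      = ((insert 0 (D.image g) : Finset (ZMod q)) : Set (ZMod q)) := by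
    ext m
    simp only [Set.mem_setOf_eq, Finset.coe_insert, Set.mem_insert_iff, Finset.mem_coe,
      Finset.mem_image]
    constructor
    · rintro ⟨t, ht, h⟩
      by_cases h1 : t ^ 2 - 1 = 0
      · left
        rw [h1] at h
        exact (mul_eq_zero.1 h.symm).resolve_right ht
      · right
        refine ⟨t, (hDm t).2 ⟨ht, ?_, ?_⟩, ?_⟩
        · intro h0; exact h1 (by linear_combination (t + 1) * h0)
        · intro h0; exact h1 (by linear_combination (t - 1) * h0)
        · rw [hg]; exact (div_eq_iff ht).2 h
    · rintro (rfl | ⟨t, ht, rfl⟩)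
      · refine ⟨1, ?_, by ring⟩
        intro h
        exact mul_ne_zero h2 h4 (by linear_combination -h)
      · have := ((hDm t).1 ht).1
        exact ⟨t, this, (div_mul_cancel₀ _ this).symm⟩
  have h0 : (0 : ZMod q) ∉ D.image g := by
    rw [Finset.mem_image]
    rintro ⟨t, ht, h⟩
    obtain ⟨ha, hb, hc⟩ := (hDm t).1 ht
    rcases div_eq_zero_iff.1 h with h | h
    · exact mul_ne_zero hb hc (by linear_combination h)
    · exact ha h
  have hfib : ∀ m ∈ D.image g, (D.filter (fun s => g s = m)).card = 3 := by
    intro m hm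
    obtain ⟨t, ht, rfl⟩ := Finset.mem_image.1 hm
    obtain ⟨ha, hb, hc⟩ := (hDm t).1 ht
    have hb' : 1 - t ≠ 0 := fun h => hb (by linear_combination -h)
    have hc' : 1 + t ≠ 0 := fun h => hc (by linear_combination h)
    have hf : t ^ 3 - 9 * t = t * ((t - 3) * (t + 3)) := by ring
    rw [hf, mul_ne_zero_iff, mul_ne_zero_iff] at ha
    obtain ⟨t0, tm, tp⟩ := ha
    have ha := ((hDm t).1 ht).1
    have key : D.filter (fun s => g s = g t) = {t, (t + 3) / (1 - t), (t - 3) / (1 + t)} := by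
      ext s
      simp only [Finset.mem_filter, Finset.mem_insert, Finset.mem_singleton]
      rw [eq_div_iff hb', eq_div_iff hc']
      have fac : (s ^ 2 - 1) * (t ^ 3 - 9 * t) - (t ^ 2 - 1) * (s ^ 3 - 9 * s)
        = (s - t) * ((s * (1 - t) - (t + 3)) * (s * (1 + t) - (t - 3))) := by ring
      constructor
      · rintro ⟨hs, h⟩
        have h' := (div_eq_div_iff ((hDm s).1 hs).1 ha).1 h
        rw [← sub_eq_zero, fac, mul_eq_zero, mul_eq_zero, sub_eq_zero, sub_eq_zero,
          sub_eq_zero] at h'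
        exact h'
      · intro h
        have h' : (s ^ 2 - 1) * (t ^ 3 - 9 * t) = (t ^ 2 - 1) * (s ^ 3 - 9 * s) := by
          rw [← sub_eq_zero, fac, mul_eq_zero, mul_eq_zero, sub_eq_zero, sub_eq_zero,
            sub_eq_zero]
          exact h
        have hs1 : s - 1 ≠ 0 ∧ s + 1 ≠ 0 := by
          constructor
          · intro e
            have e : s = 1 := by linear_combination e
            subst e
            rcases h with h | h | h
            · exact hb (by linear_combination -h)
            · exact mul_ne_zero h2 hc (by linear_combination -h)
            · exact h4 (by linear_combination h)
          · intro e
            have e : s = -1 := by linear_combination e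
            subst e
            rcases h with h | h | h
            · exact hc (by linear_combination -h)
            · exact h4 (by linear_combination -h)
            · exact mul_ne_zero h2 hb (by linear_combination -h)
        have hsd : s ^ 3 - 9 * s ≠ 0 := by
          intro e
          rw [e, mul_zero] at h'
          exact mul_ne_zero (mul_ne_zero hs1.1 hs1.2) ha (by linear_combination h')
        exact ⟨(hDm s).2 ⟨hsd, hs1⟩, (div_eq_div_iff hsd ha).2 h'⟩
    rw [key, Finset.card_eq_three]
    refine ⟨_, _, _, ?_, ?_, ?_, rfl⟩
    · intro h
      rw [eq_div_iff hb'] at h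
      exact hsq t (by linear_combination -h)
    · intro h
      rw [eq_div_iff hc'] at h
      exact hsq t (by linear_combination h)
    · intro h
      rw [div_eq_div_iff hb' hc'] at h
      exact mul_ne_zero h2 (hsq t) (by linear_combination h)
  have hcard := Finset.card_eq_sum_card_image g D
  rw [Finset.sum_congr rfl hfib, Finset.sum_const, smul_eq_mul, hDc] at hcard
  rw [hset, Set.ncard_coe_finset, Finset.card_insert_of_notMem h0]
  omega
end

section
/- Let p be a prime with p ≡ 1 (mod 3), let L, M be positive integers with 4p = L² + 27M², and let q ≥ 5 be a prime with q ≠ p and q ≡ 2 or 5 (mod 7). Then q^{(p−1)/3} ≡ −(L + 3M)·(6M)⁻¹ (mod p) if and only if there exists an integer t such that (t³ − t² − 9t + 1)·L ≡ (t³ + 27t² − 9t − 27)·M (mod q). -/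
open QuadraticAlgebra in
/-- The Eisenstein integers. -/
abbrev EisR : Type := QuadraticAlgebra ℤ (-1) (-1)

namespace EisR

def w : EisR := ⟨0, 1⟩

theorem w_rel : w ^ 2 + w + 1 = 0 := by
  rw [sq]; ext <;> simp [w, QuadraticAlgebra.re_one, QuadraticAlgebra.im_one]

instance : IsDomain EisR := by
  have : NoZeroDivisors EisR := by
    constructor
    have key : ∀ z : EisR, QuadraticAlgebra.norm z = 0 → z = 0 := by
      intro z hz
      rw [QuadraticAlgebra.norm_def] at hz
      have h2 : z.im = 0 := by
        have : z.im ^ 2 ≤ 0 := by nlinarith [sq_nonneg (2 * z.re - z.im)]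
        exact pow_eq_zero_iff (two_ne_zero) |>.1 (le_antisymm this (sq_nonneg _))
      have h1 : z.re = 0 := by
        rw [h2] at hz
        exact pow_eq_zero_iff (two_ne_zero) |>.1 (by nlinarith)
      ext <;> simp [h1, h2]
    intro a b hab
    have : QuadraticAlgebra.norm a * QuadraticAlgebra.norm b = 0 := by
      rw [← map_mul, hab, QuadraticAlgebra.norm_zero]
    rcases mul_eq_zero.1 this with h | h
    · exact Or.inl (key _ h)
    · exact Or.inr (key _ h)
  exact NoZeroDivisors.to_isDomain _

/-- Evaluation at a root of `x² + x + 1`. -/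
def ev {A : Type*} [CommRing A] (r : A) (hr : r ^ 2 + r + 1 = 0) : EisR →+* A :=
  (QuadraticAlgebra.lift (R := ℤ) (a := -1) (b := -1)
    ⟨r, by simp; linear_combination hr⟩ : EisR →ₐ[ℤ] A).toRingHom

theorem ev_apply {A : Type*} [CommRing A] (r : A) (hr : r ^ 2 + r + 1 = 0) (z : EisR) :
    ev r hr z = z.re + z.im * r := by
  simp [ev, QuadraticAlgebra.lift]

theorem w_cube : w ^ 3 = 1 := by linear_combination (w - 1) * w_rel

theorem w_prim : IsPrimitiveRoot w 3 := by
  rw [IsPrimitiveRoot.iff_def]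
  refine ⟨w_cube, fun l hl => ?_⟩
  have h3 := Nat.div_add_mod l 3
  have hlt := Nat.mod_lt l (show 3 > 0 by norm_num)
  rw [← h3, pow_add, pow_mul, w_cube, one_pow, one_mul] at hl
  generalize l % 3 = m at *
  interval_cases m
  · exact ⟨l / 3, by omega⟩
  · have := congrArg QuadraticAlgebra.im hl
    simp [w, QuadraticAlgebra.im_one] at this
  · have := congrArg QuadraticAlgebra.im hl
    simp [w, sq, QuadraticAlgebra.im_one] at this

theorem exists_char (p : ℕ) [Fact p.Prime] (hp3 : p % 3 = 1) (r : ZMod p)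
    (hr : r ^ 2 + r + 1 = 0) :
    ∃ χ : MulChar (ZMod p) EisR, χ ^ 3 = 1 ∧ χ ≠ 1 ∧
      (∀ a, ev r hr (χ a) = a ^ ((p - 1) / 3)) ∧
      (∀ a, χ a = 0 ∨ χ a = 1 ∨ χ a = w ∨ χ a = w ^ 2) := by
  classical
  have hp : p.Prime := Fact.out
  have hp2 := hp.two_le
  have hn : (p - 1) / 3 ≠ 0 := by omega
  have hn3 : (p - 1) / 3 * 3 = p - 1 := by omega
  set n := (p - 1) / 3 with hndef
  have h3 : (3 : ZMod p) ≠ 0 := by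
    intro h
    have : ((3 : ℕ) : ZMod p) = 0 := by exact_mod_cast h
    rw [ZMod.natCast_eq_zero_iff] at this
    have := (Nat.prime_dvd_prime_iff_eq hp Nat.prime_three).1 this
    omega
  have hr0 : r ≠ 0 := by rintro rfl; simp at hr
  have hr1 : r ≠ 1 := by
    rintro rfl; apply h3; linear_combination hr
  have hr3 : r ^ 3 = 1 := by linear_combination (r - 1) * hr
  have hr20 : r ^ 2 ≠ 0 := pow_ne_zero _ hr0
  have hr21 : r ^ 2 ≠ 1 := by
    intro h; apply hr1
    have : r ^ 3 = r * r ^ 2 := by ring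
    rw [hr3, h] at this; simpa using this.symm
  have hr2r : r ^ 2 ≠ r := by
    intro h; apply hr1
    have : r * r = r * 1 := by rw [mul_one, ← sq, h]
    exact mul_left_cancel₀ hr0 this
  let T : EisR → Prop := fun z => z = 0 ∨ z = 1 ∨ z = w ∨ z = w ^ 2
  have Tmul : ∀ x y, T x → T y → T (x * y) := by
    have hw4 : w ^ 2 * w ^ 2 = w := by linear_combination w * w_cube
    have hw3 : w ^ 2 * w = 1 := by linear_combination w_cube
    have hw3' : w * w ^ 2 = 1 := by linear_combination w_cube
    rintro x y (rfl | rfl | rfl | rfl) (rfl | rfl | rfl | rfl) <;> simp [T, hw4, hw3, hw3', ← sq]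
  have evw : ev r hr w = r := by simp [ev_apply, w]
  have Tinj : ∀ x y, T x → T y → ev r hr x = ev r hr y → x = y := by
    rintro x y (rfl | rfl | rfl | rfl) (rfl | rfl | rfl | rfl) <;>
      simp [evw, hr0, hr1, hr21, hr2r, hr0.symm, hr1.symm, hr21.symm, hr2r.symm, hr20, hr20.symm]
  have Tex : ∀ a : ZMod p, ∃ x, T x ∧ ev r hr x = a ^ n := by
    intro a
    by_cases ha : a = 0
    · exact ⟨0, Or.inl rfl, by simp [ha, hn]⟩
    · have h1 : (a ^ n) ^ 3 = 1 := by
        rw [← pow_mul, hn3, ZMod.pow_card_sub_one_eq_one ha]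
      have h2 : (a ^ n - 1) * ((a ^ n - r) * (a ^ n - r ^ 2)) = 0 := by
        linear_combination h1 + (a^n * r^2 - (a ^ n) ^ 2 + a ^ n - a ^ n * r - r + 1 - a ^ n * (r - 1) ^ 2) * hr
      rcases mul_eq_zero.1 h2 with h | h
      · exact ⟨1, by simp [T], by rw [map_one]; exact (sub_eq_zero.1 h).symm⟩
      rcases mul_eq_zero.1 h with h | h
      · exact ⟨w, by simp [T], by rw [evw]; exact (sub_eq_zero.1 h).symm⟩
      · exact ⟨w ^ 2, by simp [T], by rw [map_pow, evw]; exact (sub_eq_zero.1 h).symm⟩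
  choose c hcT hc using Tex
  let χ : MulChar (ZMod p) EisR :=
    { toFun := c
      map_one' := Tinj _ _ (hcT _) (by simp [T]) (by rw [hc]; simp)
      map_mul' := fun x y => Tinj _ _ (hcT _) (Tmul _ _ (hcT _) (hcT _)) (by
        rw [map_mul, hc, hc, hc, mul_pow])
      map_nonunit' := fun a ha => Tinj _ _ (hcT _) (by simp [T]) (by
        have : a = 0 := by simpa using ha
        rw [hc, this]; simp [hn]) }
  have hχ : ∀ a, χ a = c a := fun a => rfl
  refine ⟨χ, ?_, ?_, fun a => by rw [hχ, hc], fun a => by rw [hχ]; exact hcT a⟩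
  · refine MulChar.ext fun a => ?_
    rw [MulChar.pow_apply_coe, MulChar.one_apply_coe, hχ]
    refine Tinj _ 1 ?_ (by simp [T]) ?_
    · rw [pow_succ, sq]; exact Tmul _ _ (Tmul _ _ (hcT _) (hcT _)) (hcT _)
    · rw [map_pow, hc, ← pow_mul, hn3, map_one, ZMod.pow_card_sub_one_eq_one a.ne_zero]
  · intro h1
    obtain ⟨g, hg⟩ := IsCyclic.exists_generator (α := (ZMod p)ˣ)
    have h2 : (g : ZMod p) ^ n = 1 := by
      rw [← hc, ← hχ, h1, MulChar.one_apply_coe, map_one]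
    have h3 : g ^ n = 1 := by ext; simpa using h2
    have h4 := orderOf_dvd_of_pow_eq_one h3
    rw [orderOf_eq_card_of_forall_mem_zpowers hg, Nat.card_eq_fintype_card, ZMod.card_units] at h4
    have := Nat.le_of_dvd (by omega) h4
    omega

theorem sum_poly (p : ℕ) [Fact p.Prime] (P : Polynomial (ZMod p)) (hP : P.natDegree < p - 1) :
    ∑ a : ZMod p, P.eval a = 0 := by
  simp_rw [Polynomial.eval_eq_sum_range]
  rw [Finset.sum_comm]
  refine Finset.sum_eq_zero fun i hi => ?_
  rw [← Finset.mul_sum, FiniteField.sum_pow_lt_card_sub_one, mul_zero]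
  rw [ZMod.card]
  have := Finset.mem_range.1 hi
  omega

theorem jac_ev (p : ℕ) [Fact p.Prime] (hp3 : p % 3 = 1) (r : ZMod p)
    (hr : r ^ 2 + r + 1 = 0) (χ : MulChar (ZMod p) EisR)
    (hχ : ∀ a, ev r hr (χ a) = a ^ ((p - 1) / 3)) : ev r hr (jacobiSum χ χ) = 0 := by
  have hp2 := (Fact.out : p.Prime).two_le
  rw [jacobiSum, map_sum]
  simp_rw [map_mul, hχ]
  have := sum_poly p ((Polynomial.X : Polynomial (ZMod p)) ^ ((p - 1) / 3) *
    (1 - Polynomial.X) ^ ((p - 1) / 3)) (by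
      refine lt_of_le_of_lt (b := (p - 1) / 3 + (p - 1) / 3) ?_ (by omega)
      compute_degree)
  simpa using this

theorem jac_im (p : ℕ) [Fact p.Prime] (hp3 : p % 3 = 1) (χ : MulChar (ZMod p) EisR)
    (hχ : χ ^ 3 = 1) : (3 : ℤ) ∣ (jacobiSum χ χ).im := by
  obtain ⟨z, -, hz⟩ := exists_jacobiSum_eq_neg_one_add (n := 3) (by norm_num) hχ hχ
    (by rw [ZMod.card]; omega) w_prim
  have : (w - 1) ^ 2 = ((-3 : ℤ) : EisR) * w := by push_cast; linear_combination w_rel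
  rw [hz, this]
  simp only [w, QuadraticAlgebra.im_add, QuadraticAlgebra.im_neg, QuadraticAlgebra.im_one,
    QuadraticAlgebra.im_mul, QuadraticAlgebra.re_mul, QuadraticAlgebra.im_intCast, QuadraticAlgebra.re_intCast]
  exact ⟨z.im - z.re, by push_cast; ring⟩

theorem chi_inv (p : ℕ) [Fact p.Prime] (χ : MulChar (ZMod p) EisR)
    (hχT : ∀ a, χ a = 0 ∨ χ a = 1 ∨ χ a = w ∨ χ a = w ^ 2) :
    χ⁻¹ = χ.ringHomComp (starRingEnd EisR) := by
  have hs : star w = w ^ 2 := by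
    rw [sq]; ext <;> simp [w]
  rw [inv_eq_iff_mul_eq_one]
  refine MulChar.ext fun a => ?_
  rw [MulChar.mul_apply, MulChar.one_apply_coe, MulChar.ringHomComp_apply]
  have h0 : χ a ≠ 0 := (a.isUnit.map χ).ne_zero
  rcases hχT a with h | h | h | h
  · exact absurd h h0
  · simp [h]
  · rw [h, starRingEnd_apply, hs]; linear_combination w_cube
  · rw [h, starRingEnd_apply, star_pow, hs]; linear_combination (w ^ 3 + 1) * w_cube

theorem jac_norm (p : ℕ) [Fact p.Prime] (χ : MulChar (ZMod p) EisR)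
    (hχ : χ ^ 3 = 1) (hχ1 : χ ≠ 1) (hχT : ∀ a, χ a = 0 ∨ χ a = 1 ∨ χ a = w ∨ χ a = w ^ 2) :
    (jacobiSum χ χ) * star (jacobiSum χ χ) = (p : EisR) := by
  have hp : p.Prime := Fact.out
  have hχ2 : χ * χ ≠ 1 := by
    intro h; apply hχ1; rw [pow_succ, sq, h, one_mul] at hχ; exact hχ
  have hinj : Function.Injective (algebraMap EisR (FractionRing EisR)) :=
    IsFractionRing.injective _ _
  have hc : ringChar (FractionRing EisR) ≠ ringChar (ZMod p) := by
    rw [ZMod.ringChar_zmod_n]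
    have : CharZero (FractionRing EisR) := charZero_of_injective_algebraMap hinj
    rw [ringChar.eq_zero]
    exact hp.ne_zero.symm
  have key := jacobiSum_mul_jacobiSum_inv hc
    (χ := χ.ringHomComp (algebraMap EisR (FractionRing EisR)))
    (φ := χ.ringHomComp (algebraMap EisR (FractionRing EisR)))
    ((MulChar.ringHomComp_ne_one_iff hinj).2 hχ1) ((MulChar.ringHomComp_ne_one_iff hinj).2 hχ1)
    (by rw [← MulChar.ringHomComp_mul]; exact (MulChar.ringHomComp_ne_one_iff hinj).2 hχ2)
  rw [MulChar.ringHomComp_inv, jacobiSum_ringHomComp, jacobiSum_ringHomComp, chi_inv p χ hχT,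
    jacobiSum_ringHomComp, ZMod.card, ← map_mul, ← map_natCast (algebraMap EisR _)] at key
  exact hinj key

theorem jac_eq (p : ℕ) [Fact p.Prime] (hp3 : p % 3 = 1)
    (L M : ℤ) (h : (4 * p : ℤ) = L ^ 2 + 27 * M ^ 2) (r : ZMod p)
    (hr : r ^ 2 + r + 1 = 0) (hrL : ((L + 3 * M : ℤ) : ZMod p) + (6 * M : ℤ) * r = 0)
    (χ : MulChar (ZMod p) EisR)
    (hχ : χ ^ 3 = 1) (hχ1 : χ ≠ 1) (hχe : ∀ a, ev r hr (χ a) = a ^ ((p - 1) / 3))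
    (hχT : ∀ a, χ a = 0 ∨ χ a = 1 ∨ χ a = w ∨ χ a = w ^ 2) :
    ∃ e : ℤ, (e = 1 ∨ e = -1) ∧ 2 * (jacobiSum χ χ).re = e * (L + 3 * M) ∧
      (jacobiSum χ χ).im = e * (3 * M) := by
  have hp : p.Prime := Fact.out
  have e1 := jac_ev p hp3 r hr χ hχe
  have e2 := jac_im p hp3 χ hχ
  have e3 := jac_norm p χ hχ hχ1 hχT
  rw [ev_apply] at e1
  have e3' := congrArg QuadraticAlgebra.re e3
  simp only [QuadraticAlgebra.re_mul, QuadraticAlgebra.re_star, QuadraticAlgebra.im_star,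
    QuadraticAlgebra.re_natCast] at e3'
  generalize (jacobiSum χ χ).re = x at *
  generalize (jacobiSum χ χ).im = y at *
  obtain ⟨y, rfl⟩ := e2
  have hpar : Even (L + 3 * M) := by
    have : Even (L ^ 2 + 27 * M ^ 2) := ⟨2 * p, by rw [← h]; ring⟩
    have h27 : ¬ Even (27 : ℤ) := by decide
    have h3 : ¬ Even (3 : ℤ) := by decide
    simp only [Int.even_add, Int.even_mul, Int.even_pow, h27, h3] at this ⊢
    simpa using this
  obtain ⟨a, ha⟩ := hpar
  obtain rfl : L = 2 * a - 3 * M := by linarith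
  have hN : (p : ℤ) = a ^ 2 - a * (3 * M) + (3 * M) ^ 2 := by linarith
  have hN' : (p : ℤ) = x ^ 2 - x * (3 * y) + (3 * y) ^ 2 := by rw [← e3']; simp; ring
  have h2 : (2 : ZMod p) ≠ 0 := by
    intro h
    have : ((2 : ℕ) : ZMod p) = 0 := by exact_mod_cast h
    rw [ZMod.natCast_eq_zero_iff] at this
    have := (Nat.prime_dvd_prime_iff_eq hp Nat.prime_two).1 this
    omega
  have hd : (p : ℤ) ∣ a * y - x * M := by
    have h3 : ¬ (p : ℤ) ∣ 3 := by
      intro h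
      have h : p ∣ 3 := by exact_mod_cast h
      have := (Nat.prime_dvd_prime_iff_eq hp Nat.prime_three).1 h
      omega
    have : (p : ℤ) ∣ 3 * (a * y - x * M) := by
      rw [← ZMod.intCast_zmod_eq_zero_iff_dvd]
      push_cast at *
      apply mul_left_cancel₀ h2
      linear_combination (3 * y : ZMod p) * hrL - (6 * M : ZMod p) * e1
    exact ((Nat.prime_iff_prime_int.1 hp).dvd_mul.1 this).resolve_left h3
  obtain ⟨k, hk⟩ := hd
  have hp0 : (p : ℤ) ≠ 0 := by exact_mod_cast hp.ne_zero
  have hnorm : (a * x - 3 * a * y + 9 * M * y) ^ 2 -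
      (a * x - 3 * a * y + 9 * M * y) * (-3 * (p * k)) + (-3 * (p * k)) ^ 2 = (p : ℤ) ^ 2 := by
    rw [← hk]
    have : (p : ℤ) ^ 2 = (a ^ 2 - a * (3 * M) + (3 * M) ^ 2) * (x ^ 2 - x * (3 * y) + (3 * y) ^ 2) := by
      rw [← hN, ← hN', sq]
    rw [this]; ring
  have hX : (p : ℤ) ∣ a * x - 3 * a * y + 9 * M * y := by
    have : (p : ℤ) ∣ (a * x - 3 * a * y + 9 * M * y) ^ 2 :=
      ⟨p - (a * x - 3 * a * y + 9 * M * y) * 3 * k - 9 * p * k ^ 2, by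
        linear_combination hnorm⟩
    exact (Nat.prime_iff_prime_int.1 hp).dvd_of_dvd_pow this
  obtain ⟨X, hX⟩ := hX
  rw [hX] at hnorm
  have hXk : X ^ 2 + 3 * X * k + 9 * k ^ 2 = 1 := by
    apply mul_left_cancel₀ (pow_ne_zero 2 hp0)
    linear_combination hnorm
  have hk0 : k = 0 := by
    have : k ^ 2 < 1 := by nlinarith [sq_nonneg (2 * X + 3 * k)]
    have := (sq_lt_one_iff_abs_lt_one k).1 this
    rw [Int.abs_lt_one_iff] at this
    exact this
  subst hk0
  have hX1 : X = 1 ∨ X = -1 := by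
    have : (X - 1) * (X + 1) = 0 := by linarith
    rcases mul_eq_zero.1 this with h | h
    · left; linarith
    · right; linarith
  have hy : y = X * M := by
    apply mul_left_cancel₀ hp0
    linear_combination y * hN + a * hk + M * hX
  have hx : x = X * a := by
    apply mul_left_cancel₀ hp0
    linear_combination x * hN + a * hX + (3 * a - 9 * M) * hk
  exact ⟨X, hX1, by rw [hx]; ring, by rw [hy]; ring⟩

section recip

variable {K : Type} [Field K]

theorem ev_star (o : K) (ho : o ^ 2 + o + 1 = 0) (z : EisR) :
    ev o ho (star z) = z.re + z.im * o ^ 2 := by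
  rw [ev_apply]
  simp
  linear_combination (-(z.im : K)) * ho

theorem recip_aux (p q : ℕ) [Fact p.Prime] [Fact q.Prime] [IsAlgClosed K] [CharP K q]
    (hq5 : 5 ≤ q) (hqp : q ≠ p) (o : K) (ho : o ^ 2 + o + 1 = 0)
    (χ : MulChar (ZMod p) EisR)
    (hχ : χ ^ 3 = 1) (hχ1 : χ ≠ 1) (hχT : ∀ a, χ a = 0 ∨ χ a = 1 ∨ χ a = w ∨ χ a = w ^ 2) :
    (q % 3 = 1 → ev o ho (jacobiSum χ χ) ^ ((q - 1) / 3) =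
      ev o ho (χ q) * ev o ho (star (jacobiSum χ χ)) ^ ((q - 1) / 3)) ∧
    (q % 3 = 2 → ev o ho (star (jacobiSum χ χ)) ^ ((q + 1) / 3) =
      ev o ho (χ q) * ev o ho (jacobiSum χ χ) ^ ((q + 1) / 3)) := by
  have hp : p.Prime := Fact.out
  have hq : q.Prime := Fact.out
  have hpK : (p : K) ≠ 0 := by
    rw [Ne, CharP.cast_eq_zero_iff K q]
    exact fun h => hqp ((Nat.prime_dvd_prime_iff_eq hq hp).1 h)
  have h3K : (3 : K) ≠ 0 := by
    have : ((3 : ℕ) : K) ≠ 0 := by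
      rw [Ne, CharP.cast_eq_zero_iff K q]
      intro h
      have := (Nat.prime_dvd_prime_iff_eq hq Nat.prime_three).1 h
      omega
    exact_mod_cast this
  have ho1 : o ≠ 1 := by rintro rfl; apply h3K; linear_combination ho
  have ho3 : o ^ 3 = 1 := by linear_combination (o - 1) * ho
  have evw : ev o ho w = o := by simp [ev_apply, w]
  have hN : ev o ho (jacobiSum χ χ) * ev o ho (star (jacobiSum χ χ)) = p := by
    rw [← map_mul, jac_norm p χ hχ hχ1 hχT, map_natCast]
  have hfr1 : q % 3 = 1 → ev o ho (jacobiSum χ χ) ^ q = ev o ho (jacobiSum χ χ) := by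
    intro h
    have hoq : o ^ q = o := by
      rw [← Nat.div_add_mod q 3, h, pow_add, pow_mul, ho3]; simp
    rw [ev_apply, ← frobenius_def, map_add, map_mul, map_intCast, map_intCast, frobenius_def, hoq]
  have hfr2 : q % 3 = 2 → ev o ho (jacobiSum χ χ) ^ q = ev o ho (star (jacobiSum χ χ)) := by
    intro h
    have hoq : o ^ q = o ^ 2 := by
      rw [← Nat.div_add_mod q 3, h, pow_add, pow_mul, ho3]; simp
    rw [ev_star, ev_apply, ← frobenius_def, map_add, map_mul, map_intCast, map_intCast,
      frobenius_def, hoq]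
  set χK : MulChar (ZMod p) K := χ.ringHomComp (ev o ho) with hχK
  have hJ : jacobiSum χK χK = ev o ho (jacobiSum χ χ) := jacobiSum_ringHomComp _ _ _
  have hK3 : χK ^ 3 = 1 := by
    rw [hχK, MulChar.ringHomComp_pow, hχ, MulChar.ringHomComp_one]
  have hK1 : χK ≠ 1 := by
    obtain ⟨a, ha⟩ := MulChar.ne_one_iff.1 hχ1
    refine MulChar.ne_one_iff.2 ⟨a, ?_⟩
    rw [hχK, MulChar.ringHomComp_apply]
    rcases hχT a with h | h | h | h
    · exact absurd h (a.isUnit.map χ).ne_zero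
    · exact absurd h ha
    · rw [h, evw]; exact ho1
    · rw [h, map_pow, evw]
      intro h2
      apply ho1
      linear_combination ho3 - o * h2
  have hinv : χK * χK = χK⁻¹ := by
    rw [eq_inv_iff_mul_eq_one, ← hK3, pow_succ, sq]
  have hK2 : χK * χK ≠ 1 := by rw [hinv, Ne, inv_eq_one]; exact hK1
  have : NeZero (p : K) := ⟨hpK⟩
  obtain ⟨ζ, hζ⟩ := HasEnoughRootsOfUnity.exists_primitiveRoot K p
  have hψ := AddChar.zmodChar_primitive_of_primitive_root p hζ
  set ψ := AddChar.zmodChar p ((IsPrimitiveRoot.iff_def ζ p).mp hζ).left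
  have e1 := jacobiSum_mul_nontrivial hK2 ψ
  rw [hinv, hJ] at e1
  have e2 := gaussSum_mul_gaussSum_eq_card hK1 hψ
  have hm1 : χK⁻¹ (-1) = 1 := by
    have h1 : (χK⁻¹) ^ 3 = 1 := by rw [inv_pow, hK3, inv_one]
    calc χK⁻¹ (-1) = χK⁻¹ ((-1) ^ 3) := by congr 1; ring
      _ = (χK⁻¹ ^ 3) (-1) := by rw [map_pow, MulChar.pow_apply' _ (by norm_num)]
      _ = 1 := by rw [h1, ← Units.coe_neg_one, MulChar.one_apply_coe]
  have e3 := mul_gaussSum_inv_eq_gaussSum χK⁻¹ ψ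
  rw [hm1, one_mul] at e3
  rw [e3, ZMod.card] at e2
  have hqu : IsUnit (q : ZMod p) := by
    rw [isUnit_iff_ne_zero, Ne, ZMod.natCast_eq_zero_iff]
    exact fun h => hqp ((Nat.prime_dvd_prime_iff_eq hp hq).1 h).symm
  have e4 : (χK ^ q) q * gaussSum χK ψ ^ q = gaussSum (χK ^ q) ψ := by
    rw [gaussSum_frob, AddChar.pow_mulShift, ← gaussSum_mulShift _ ψ hqu.unit, hqu.unit_spec]
  have hcq : ev o ho (χ q) = χK q := rfl
  rw [hcq]
  set G := gaussSum χK ψ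
  set G2 := gaussSum χK⁻¹ ψ
  set J := ev o ho (jacobiSum χ χ)
  set J' := ev o ho (star (jacobiSum χ χ))
  have hJ0 : J ≠ 0 := by intro h; rw [h, zero_mul] at hN; exact hpK hN.symm
  have hG0 : G ≠ 0 := by intro h; rw [h, zero_mul] at e2; exact hpK e2.symm
  have hG3 : G ^ 3 = J ^ 2 * J' := by
    calc G ^ 3 = G * (G * G) := by ring
      _ = (G * G2) * J := by rw [← e1]; ring
      _ = _ := by rw [e2, ← hN]; ring
  constructor
  · intro h
    have hKq : χK ^ q = χK := by
      rw [← Nat.div_add_mod q 3, h, pow_add, pow_mul, hK3]; simp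
    rw [hKq] at e4
    obtain ⟨n, hn⟩ : ∃ n, q = 3 * n + 1 := ⟨q / 3, by omega⟩
    have hn' : (q - 1) / 3 = n := by omega
    have f1 := hfr1 h
    rw [hn']
    rw [hn] at f1
    rw [show gaussSum χK ψ = G from rfl] at e4
    have e5 : χK q * (J ^ 2 * J') ^ n = 1 := by
      rw [← hG3]
      apply mul_right_cancel₀ hG0
      rw [one_mul]
      nth_rewrite 3 [← e4]
      rw [hn]; ring
    have f2 : J ^ (3 * n) = 1 := by
      apply mul_right_cancel₀ hJ0
      rw [← pow_succ, f1, one_mul]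
    calc J ^ n = J ^ n * (χK q * (J ^ 2 * J') ^ n) := by rw [e5, mul_one]
      _ = J ^ (3 * n) * (χK q * J' ^ n) := by ring
      _ = _ := by rw [f2, one_mul]
  · intro h
    have hKq : χK ^ q = χK⁻¹ := by
      rw [← hinv, ← Nat.div_add_mod q 3, h, pow_add, pow_mul, hK3]; simp [sq]
    rw [hKq] at e4
    obtain ⟨n, hn⟩ : ∃ n, q + 1 = 3 * n := ⟨(q + 1) / 3, by omega⟩
    have hn' : (q + 1) / 3 = n := by omega
    have f1 := hfr2 h
    rw [hn']
    rw [show gaussSum χK⁻¹ ψ = G2 from rfl] at e4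
    have e5 : χK⁻¹ q * (J ^ 2 * J') ^ n = J * J' := by
      rw [← hG3, hN, ← e2, ← e4, ← pow_mul, ← hn]; ring
    have f2 : J ^ (3 * n) = J * J' := by
      rw [← hn, pow_succ, f1]; ring
    have hc : χK q * χK⁻¹ q = 1 := by
      rw [← MulChar.mul_apply, mul_inv_cancel, ← hqu.unit_spec, MulChar.one_apply_coe]
    rw [← f2] at e5
    have e6 : χK⁻¹ q * J' ^ n = J ^ n := by
      apply mul_left_cancel₀ (pow_ne_zero (2 * n) hJ0)
      rw [← pow_add, show 2 * n + n = 3 * n by ring, ← e5]; ring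
    rw [← e6, ← mul_assoc, hc, one_mul]

theorem recip (p q : ℕ) [Fact p.Prime] [Fact q.Prime] [IsAlgClosed K] [CharP K q]
    (hp3 : p % 3 = 1) (L M : ℤ) (hM : 0 < M) (h : (4 * p : ℤ) = L ^ 2 + 27 * M ^ 2)
    (hq5 : 5 ≤ q) (hqp : q ≠ p) (o : K) (ho : o ^ 2 + o + 1 = 0) :
    ∃ c : K, ((q : ZMod p) ^ ((p - 1) / 3) =
        ((-(L + 3 * M) : ℤ) : ZMod p) * (((6 * M : ℤ) : ZMod p))⁻¹ ↔ c = o) ∧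
      (q % 3 = 1 → (L + 3 * M * (1 + 2 * o)) ^ ((q - 1) / 3) =
        c * (L - 3 * M * (1 + 2 * o)) ^ ((q - 1) / 3)) ∧
      (q % 3 = 2 → (L - 3 * M * (1 + 2 * o)) ^ ((q + 1) / 3) =
        c * (L + 3 * M * (1 + 2 * o)) ^ ((q + 1) / 3)) := by
  have hp : p.Prime := Fact.out
  have hq : q.Prime := Fact.out
  have h6M : ((6 * M : ℤ) : ZMod p) ≠ 0 := by
    rw [Ne, ZMod.intCast_zmod_eq_zero_iff_dvd]
    intro hd
    have hpi := Nat.prime_iff_prime_int.1 hp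
    have hp2 := hp.two_le
    have hp7 : 7 ≤ p := by
      by_contra hlt
      have : p = 4 := by
        have : p ≠ 1 := by omega
        omega
      subst this; revert hp; decide
    have hd' : (p : ℤ) ∣ M := by
      rcases hpi.dvd_mul.1 hd with h6 | h6
      · have := Nat.le_of_dvd (by norm_num) (show p ∣ 6 by exact_mod_cast h6)
        omega
      · exact h6
    have hle := Int.le_of_dvd hM hd'
    nlinarith [sq_nonneg L]
  set r : ZMod p := ((-(L + 3 * M) : ℤ) : ZMod p) * (((6 * M : ℤ) : ZMod p))⁻¹ with hrdef
  have hrL : ((L + 3 * M : ℤ) : ZMod p) + (6 * M : ℤ) * r = 0 := by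
    rw [hrdef, mul_left_comm, mul_inv_cancel₀ h6M]; push_cast; ring
  have hr : r ^ 2 + r + 1 = 0 := by
    have h0 : ((L ^ 2 + 27 * M ^ 2 : ℤ) : ZMod p) = 0 := by
      rw [← h]; push_cast; simp
    apply mul_left_cancel₀ (pow_ne_zero 2 h6M)
    push_cast at *
    linear_combination (6 * M * r + 3 * M - L : ZMod p) * hrL + h0
  obtain ⟨χ, hχ, hχ1, hχe, hχT⟩ := exists_char p hp3 r hr
  obtain ⟨e, he, hx, hy⟩ := jac_eq p hp3 L M h r hr hrL χ hχ hχ1 hχe hχT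
  obtain ⟨r1, r2⟩ := recip_aux p q hq5 hqp o ho χ hχ hχ1 hχT
  have hodd : ∀ n : ℕ, (0 < n) → n < 5 → (n : K) ≠ 0 := by
    intro n h0 h5
    rw [Ne, CharP.cast_eq_zero_iff K q]
    intro h
    have := Nat.le_of_dvd h0 h
    omega
  have h2K : (2 : K) ≠ 0 := by exact_mod_cast hodd 2 (by norm_num) (by norm_num)
  have h3K : (3 : K) ≠ 0 := by exact_mod_cast hodd 3 (by norm_num) (by norm_num)
  have he2 : (e : K) * e = 1 := by rcases he with rfl | rfl <;> simp
  have hxK : (2 : K) * (jacobiSum χ χ).re = e * (L + 3 * M) := by exact_mod_cast congrArg (Int.cast (R := K)) hx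
  have hyK : ((jacobiSum χ χ).im : K) = e * (3 * M) := by exact_mod_cast congrArg (Int.cast (R := K)) hy
  have hA : (L + 3 * M * (1 + 2 * o) : K) = (2 * e) * ev o ho (jacobiSum χ χ) := by
    rw [ev_apply]
    linear_combination (-(e : K)) * hxK - (2 * e * o : K) * hyK - (L + 3 * M + 6 * M * o : K) * he2
  have hB : (L - 3 * M * (1 + 2 * o) : K) = (2 * e) * ev o ho (star (jacobiSum χ χ)) := by
    rw [ev_star]
    linear_combination (-(e : K)) * hxK - (2 * e * o ^ 2 : K) * hyK - (L + 3 * M + 6 * M * o ^ 2 : K) * he2 - 6 * M * ho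
  refine ⟨ev o ho (χ q), ?_, ?_, ?_⟩
  · rw [← hχe]
    have h3p : (3 : ZMod p) ≠ 0 := by
      intro h
      have : ((3 : ℕ) : ZMod p) = 0 := by exact_mod_cast h
      rw [ZMod.natCast_eq_zero_iff] at this
      have := (Nat.prime_dvd_prime_iff_eq hp Nat.prime_three).1 this
      omega
    have key : ∀ {F : Type} [Field F] (x : F) (hx : x ^ 2 + x + 1 = 0), (3 : F) ≠ 0 →
        (ev x hx (χ q) = x ↔ χ q = w) := by
      intro F _ x hx h3
      have evw : ev x hx w = x := by simp [ev_apply, w]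
      have hx0 : x ≠ 0 := by rintro rfl; simp at hx
      have hx1 : x ≠ 1 := by rintro rfl; apply h3; linear_combination hx
      have hw0 : w ≠ 0 := by intro h; rw [h] at evw; simp at evw; exact hx0 evw.symm
      have hw1 : w ≠ 1 := by intro h; rw [h] at evw; simp at evw; exact hx1 evw.symm
      have hwsq : w ^ 2 ≠ w := by
        intro h; apply hw1; apply mul_left_cancel₀ hw0; rw [mul_one, ← sq, h]
      have hxsq : x ^ 2 ≠ x := by
        intro h; apply hx1; apply mul_left_cancel₀ hx0; rw [mul_one, ← sq, h]
      rcases hχT q with h | h | h | h <;> rw [h] <;>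
        simp [evw, hx0.symm, hx1.symm, hxsq, hw0.symm, hw1.symm, hwsq]
    rw [key r hr h3p, key o ho h3K]
  · intro hq3
    rw [hA, hB, mul_pow, mul_pow, r1 hq3]; ring
  · intro hq3
    rw [hA, hB, mul_pow, mul_pow, r2 hq3]; ring

theorem final_aux (q n : ℕ) [Fact q.Prime] [IsAlgClosed K] [CharP K q] (L M : ℤ) (s : K)
    (hq5 : 5 ≤ q) (hs : s ^ 2 = -3) (hA : (L + 3 * M * s : K) ≠ 0) (hB : (L - 3 * M * s : K) ≠ 0)
    (hA7 : (1 + 3 * s : K) ≠ 0) (hB7 : (1 - 3 * s : K) ≠ 0)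
    (hn : (q = 3 * n + 1 ∧ s ^ q = s) ∨ (q + 1 = 3 * n ∧ s ^ q = -s)) :
    ((L + 3 * M * s) * (1 - 3 * s) : K) ^ n = ((L - 3 * M * s) * (1 + 3 * s)) ^ n ↔
      ∃ t : ℤ, (t ^ 3 - t ^ 2 - 9 * t + 1) * L ≡
        (t ^ 3 + 27 * t ^ 2 - 9 * t - 27) * M [ZMOD (q : ℤ)] := by
  have hodd : ∀ n : ℕ, (0 < n) → n < 5 → (n : K) ≠ 0 := by
    intro n h0 h5
    rw [Ne, CharP.cast_eq_zero_iff K q]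
    intro h
    have := Nat.le_of_dvd h0 h
    omega
  have h2K : (2 : K) ≠ 0 := by exact_mod_cast hodd 2 (by norm_num) (by norm_num)
  have h3K : (3 : K) ≠ 0 := by exact_mod_cast hodd 3 (by norm_num) (by norm_num)
  have hs0 : s ≠ 0 := by
    rintro rfl; apply h3K; linear_combination hs
  have h6s : 6 * s ≠ 0 := by
    have : (6 : K) = 2 * 3 := by norm_num
    rw [this]; exact mul_ne_zero (mul_ne_zero h2K h3K) hs0
  have hmod : ∀ t : ℤ, ((t ^ 3 - t ^ 2 - 9 * t + 1) * L ≡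
        (t ^ 3 + 27 * t ^ 2 - 9 * t - 27) * M [ZMOD (q : ℤ)]) ↔
      (t - s) ^ 3 * ((L - 3 * M * s) * (1 + 3 * s)) =
        ((t + s) ^ 3 * ((L + 3 * M * s) * (1 - 3 * s)) : K) := by
    intro t
    rw [← CharP.intCast_eq_intCast K q]
    push_cast
    have id : (t - s) ^ 3 * ((L - 3 * M * s) * (1 + 3 * s)) -
        ((t + s) ^ 3 * ((L + 3 * M * s) * (1 - 3 * s)) : K) =
        6 * s * ((t ^ 3 - t ^ 2 - 9 * t + 1) * L - (t ^ 3 + 27 * t ^ 2 - 9 * t - 27) * M) := by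
      have hs3 : s ^ 3 = -3 * s := by linear_combination s * hs
      have hs4 : s ^ 4 = 9 := by linear_combination (s ^ 2 - 3) * hs
      have hs5 : s ^ 5 = 9 * s := by linear_combination s * hs4
      ring_nf
      simp only [hs, hs3, hs4, hs5]
      ring
    constructor
    · intro h
      rw [← sub_eq_zero, id, h]; ring
    · intro h
      rw [← sub_eq_zero, id] at h
      exact sub_eq_zero.1 ((mul_eq_zero.1 h).resolve_left h6s)
  simp_rw [hmod]
  constructor
  · intro h
    have hden : ((L - 3 * M * s) * (1 + 3 * s) : K) ≠ 0 := mul_ne_zero hB hA7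
    obtain ⟨v, hv⟩ := IsAlgClosed.exists_pow_nat_eq
      (((L + 3 * M * s) * (1 - 3 * s)) / ((L - 3 * M * s) * (1 + 3 * s)) : K) (n := 3) (by norm_num)
    have hv' : v ^ 3 * ((L - 3 * M * s) * (1 + 3 * s)) = (L + 3 * M * s) * (1 - 3 * s) := by
      rw [hv, div_mul_cancel₀ _ hden]
    have hvn : v ^ (3 * n) = 1 := by
      rw [pow_mul, hv, div_pow, h, div_self (pow_ne_zero _ hden)]
    have hv0 : v ≠ 0 := by
      rintro rfl
      rw [zero_pow (by norm_num), zero_mul] at hv'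
      exact mul_ne_zero hA hB7 hv'.symm
    by_cases hv1 : v = 1
    · refine ⟨1, ?_⟩
      rw [← hmod]
      have : (L : K) = M := by
        apply mul_left_cancel₀ h6s
        rw [hv1] at hv'
        linear_combination hv'
      rw [← CharP.intCast_eq_intCast K q]
      push_cast
      rw [this]
      try ring
    · have hv1' : v - 1 ≠ 0 := sub_ne_zero.2 hv1
      obtain ⟨t, ht⟩ : ∃ t : K, t = -s * (v + 1) / (v - 1) := ⟨_, rfl⟩
      have ht' : t * (v - 1) = -s * (v + 1) := by rw [ht, div_mul_cancel₀ _ hv1']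
      have htq : t ^ q = t := by
        have hfr : t ^ q * (v ^ q - 1) = -s ^ q * (v ^ q + 1) := by
          have := congrArg (frobenius K q) ht'
          rw [map_mul, map_mul, map_neg, map_sub, map_add, map_one] at this
          simpa only [frobenius_def] using this
        rcases hn with ⟨hq, hsq⟩ | ⟨hq, hsq⟩
        · have hvq : v ^ q = v := by rw [hq, pow_succ, hvn, one_mul]
          rw [hsq, hvq, ← ht'] at hfr
          exact mul_right_cancel₀ hv1' hfr
        · have hvq : v ^ q * v = 1 := by rw [← pow_succ, hq, hvn]
          rw [hsq] at hfr
          apply mul_right_cancel₀ hv1'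
          linear_combination (-v) * hfr - ht' + (t ^ q - s) * hvq
      have hmem : t ∈ (⊥ : Subfield K) := (Subfield.mem_bot_iff_pow_eq_self K q).2 htq
      obtain ⟨m, hz⟩ := (mem_bot_iff_intCast q K).1 hmem
      refine ⟨m, ?_⟩
      rw [hz]
      have h1 : v * (t + s) = t - s := by linear_combination ht'
      rw [← h1, ← hv']; ring
  · rintro ⟨t, ht⟩
    have hA' := mul_ne_zero hA hB7
    have hB' := mul_ne_zero hB hA7
    have h2s : (2 * s) ^ 3 ≠ 0 := pow_ne_zero _ (mul_ne_zero h2K hs0)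
    have h1 : (t - s : K) ≠ 0 := by
      intro h
      rw [h, zero_pow (by norm_num), zero_mul, show (t + s : K) = 2 * s by linear_combination h] at ht
      exact mul_ne_zero h2s hA' ht.symm
    have h2 : (t + s : K) ≠ 0 := by
      intro h
      rw [h, zero_pow (by norm_num), zero_mul, show (t - s : K) = -(2 * s) by linear_combination h] at ht
      refine mul_ne_zero ?_ hB' ht
      exact pow_ne_zero _ (neg_ne_zero.2 (mul_ne_zero h2K hs0))
    have hpow := congrArg (fun x => x ^ n) ht
    beta_reduce at hpow
    rw [mul_pow ((t - s : K) ^ 3), mul_pow ((t + s : K) ^ 3), ← pow_mul, ← pow_mul] at hpow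
    have hf1 : (t - s : K) ^ q = t - s ^ q := by
      rw [← frobenius_def, map_sub, map_intCast, frobenius_def]
    have hf2 : (t + s : K) ^ q = t + s ^ q := by
      rw [← frobenius_def, map_add, map_intCast, frobenius_def]
    have heq : (t - s : K) ^ (3 * n) = (t + s) ^ (3 * n) := by
      rcases hn with ⟨hq, hsq⟩ | ⟨hq, hsq⟩
      · rw [hsq, hq, pow_succ] at hf1 hf2
        rw [mul_right_cancel₀ h1 (hf1.trans (one_mul _).symm),
          mul_right_cancel₀ h2 (hf2.trans (one_mul _).symm)]
      · rw [← hq, pow_succ, pow_succ, hf1, hf2, hsq]; ring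
    rw [heq] at hpow
    exact (mul_left_cancel₀ (pow_ne_zero _ h2) hpow).symm

theorem pow_q1 {o : K} (ho3 : o ^ 3 = 1) {q : ℕ} (h : q % 3 = 1) : o ^ q = o := by
  rw [← Nat.div_add_mod q 3, h, pow_add, pow_mul, ho3]; simp

theorem pow_q2 {o : K} (ho3 : o ^ 3 = 1) {q : ℕ} (h : q % 3 = 2) : o ^ q = o ^ 2 := by
  rw [← Nat.div_add_mod q 3, h, pow_add, pow_mul, ho3]; simp

end recip

end EisR

open EisR
/-- Rule (e) with the plus sign: for a prime `q ≥ 5`, `q ≡ ±2 (mod 7)`, `q ≠ p`,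
`F_q(L,M) = ω` iff `(t³−t²−9t+1)L ≡ (t³+27t²−9t−27)M (mod q)` for some `t`. -/
theorem rule_e_plus (p : ℕ) (hp : p.Prime) (hp3 : p % 3 = 1)
    (L M : ℤ) (hL : 0 < L) (hM : 0 < M) (h : (4 * p : ℤ) = L ^ 2 + 27 * M ^ 2)
    (q : ℕ) (hq : q.Prime) (hq5 : 5 ≤ q) (hqp : q ≠ p)
    (hq7 : q % 7 = 2 ∨ q % 7 = 5) :
    ((q : ZMod p) ^ ((p - 1) / 3) =
        ((-(L + 3 * M) : ℤ) : ZMod p) * (((6 * M : ℤ) : ZMod p))⁻¹) ↔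
      ∃ t : ℤ, (t ^ 3 - t ^ 2 - 9 * t + 1) * L ≡
        (t ^ 3 + 27 * t ^ 2 - 9 * t - 27) * M [ZMOD (q : ℤ)] := by
  have := Fact.mk hp
  have := Fact.mk hq
  let K := AlgebraicClosure (ZMod q)
  have h28 : ∀ N : ℕ, N.Prime → q ≠ N → (N : K) ≠ 0 := by
    intro N hN hne
    rw [Ne, CharP.cast_eq_zero_iff K q]
    exact fun h => hne ((Nat.prime_dvd_prime_iff_eq hq hN).1 h)
  have h2K : (2 : K) ≠ 0 := by exact_mod_cast h28 2 Nat.prime_two (by omega)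
  have h3K : (3 : K) ≠ 0 := by exact_mod_cast h28 3 Nat.prime_three (by omega)
  have h7K : (7 : K) ≠ 0 := by exact_mod_cast h28 7 (by norm_num) (by omega)
  have hpK : (p : K) ≠ 0 := h28 p hp hqp
  have h4K : (4 : K) ≠ 0 := by
    rw [show (4 : K) = 2 * 2 by norm_num]; exact mul_ne_zero h2K h2K
  have : NeZero ((3 : ℕ) : K) := ⟨by exact_mod_cast h3K⟩
  obtain ⟨o, hoprim⟩ := HasEnoughRootsOfUnity.exists_primitiveRoot K 3
  have ho3 : o ^ 3 = 1 := hoprim.pow_eq_one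
  have ho1 : o ≠ 1 := hoprim.ne_one (by norm_num)
  have ho : o ^ 2 + o + 1 = 0 := by
    apply mul_left_cancel₀ (sub_ne_zero.2 ho1)
    linear_combination ho3
  have ho0 : o ≠ 0 := by rintro rfl; simp at ho
  obtain ⟨c, hc, hc1, hc2⟩ := recip (K := K) p q hp3 L M hM h hq5 hqp o ho
  have : Fact (Nat.Prime 7) := ⟨by norm_num⟩
  obtain ⟨c7, hc7, hc71, hc72⟩ := recip (K := K) 7 q (by norm_num) 1 1 (by norm_num) (by norm_num)
    hq5 (by omega) o ho
  have hc7o : c7 = o := by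
    apply hc7.1
    have : (q : ZMod 7) = 2 ∨ (q : ZMod 7) = 5 := by
      rw [← ZMod.natCast_mod q 7]
      rcases hq7 with h | h <;> rw [h]
      · left; rfl
      · right; rfl
    have h6 : (((6 * 1 : ℤ)) : ZMod 7) ≠ 0 := by
      rw [show (((6 * 1 : ℤ)) : ZMod 7) = 6 by norm_num]; exact ne_of_beq_false rfl
    rw [eq_mul_inv_iff_mul_eq₀ h6]
    rcases this with h | h <;> rw [h] <;> rfl
  subst hc7o
  rw [hc]
  have hs : (1 + 2 * c7) ^ 2 = -3 := by linear_combination 4 * ho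
  have hAB : (L + 3 * M * (1 + 2 * c7) : K) * (L - 3 * M * (1 + 2 * c7)) ≠ 0 := by
    have h' : (4 * p : K) = L ^ 2 + 27 * M ^ 2 := by
      have := congrArg (Int.cast (R := K)) h
      push_cast at this
      exact this
    have : (L + 3 * M * (1 + 2 * c7) : K) * (L - 3 * M * (1 + 2 * c7)) = 4 * p := by
      linear_combination (-9 * M ^ 2 : K) * hs - h'
    rw [this]; exact mul_ne_zero h4K hpK
  have hAB7 : (1 + 3 * (1 + 2 * c7) : K) * (1 - 3 * (1 + 2 * c7)) ≠ 0 := by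
    have : (1 + 3 * (1 + 2 * c7) : K) * (1 - 3 * (1 + 2 * c7)) = 4 * 7 := by
      linear_combination (-9 : K) * hs
    rw [this]; exact mul_ne_zero h4K h7K
  have hA := left_ne_zero_of_mul hAB
  have hB := right_ne_zero_of_mul hAB
  have hA7 := left_ne_zero_of_mul hAB7
  have hB7 := right_ne_zero_of_mul hAB7
  have hsq : (1 + 2 * c7) ^ q = 1 + 2 * c7 ^ q := by
    rw [← frobenius_def, map_add, map_mul, map_one, map_ofNat, frobenius_def]
  have hq3 : q % 3 = 1 ∨ q % 3 = 2 := by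
    have : q % 3 ≠ 0 := by
      intro h0
      have := (Nat.prime_dvd_prime_iff_eq Nat.prime_three hq).1 (Nat.dvd_of_mod_eq_zero h0)
      omega
    omega
  simp only [Int.cast_one, mul_one] at hc71 hc72
  rcases hq3 with hq3 | hq3
  · have hoq : c7 ^ q = c7 := pow_q1 ho3 hq3
    rw [← final_aux (K := K) q ((q - 1) / 3) L M (1 + 2 * c7) hq5 hs hA hB hA7 hB7
      (Or.inl ⟨by omega, by rw [hsq, hoq]⟩)]
    have e1 := hc1 hq3
    have e2 := hc71 hq3
    rw [mul_pow, mul_pow, e1, e2]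
    constructor
    · rintro rfl; ring
    · intro h
      apply mul_left_cancel₀ (mul_ne_zero (pow_ne_zero ((q - 1) / 3) hB)
        (pow_ne_zero ((q - 1) / 3) hB7))
      linear_combination h
  · have hoq : c7 ^ q = c7 ^ 2 := pow_q2 ho3 hq3
    rw [← final_aux (K := K) q ((q + 1) / 3) L M (1 + 2 * c7) hq5 hs hA hB hA7 hB7
      (Or.inr ⟨by omega, by rw [hsq, hoq]; linear_combination 2 * ho⟩)]
    have e1 := hc2 hq3
    have e2 := hc72 hq3
    rw [mul_pow, mul_pow, e1, e2]
    constructor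
    · rintro rfl; ring
    · intro h
      apply mul_left_cancel₀ (mul_ne_zero (pow_ne_zero ((q + 1) / 3) hA)
        (pow_ne_zero ((q + 1) / 3) hA7))
      linear_combination -h
end

section
/- Let p be a prime with p ≡ 1 (mod 3), let L, M be positive integers with 4p = L² + 27M², and let q ≥ 5 be a prime with q ≠ p and q ≡ 3 or 4 (mod 7). Then q^{(p−1)/3} ≡ −(L + 3M)·(6M)⁻¹ (mod p) if and only if there exists an integer t such that (t³ − t² − 9t + 1)·L ≡ −(t³ + 27t² − 9t − 27)·M (mod q). -/
namespace CubicRule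

/-- First coordinate of the cubic character in the basis `1, ω`. -/
def c0 {p : ℕ} (r y : ZMod p) : ℤ :=
  if y = 0 then 0 else if y ^ ((p - 1) / 3) = 1 then 1
  else if y ^ ((p - 1) / 3) = r then 0 else -1

/-- Second coordinate of the cubic character in the basis `1, ω`. -/
def c1 {p : ℕ} (r y : ZMod p) : ℤ :=
  if y = 0 then 0 else if y ^ ((p - 1) / 3) = 1 then 0
  else if y ^ ((p - 1) / 3) = r then 1 else -1

section
variable {p : ℕ} [Fact p.Prime]

lemma three_ne (hp3 : p % 3 = 1) : (3 : ZMod p) ≠ 0 := by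
  intro h
  have h' : ((3 : ℕ) : ZMod p) = 0 := by exact_mod_cast h
  rw [ZMod.natCast_eq_zero_iff] at h'
  have := (Nat.prime_dvd_prime_iff_eq (Fact.out : p.Prime) Nat.prime_three).1 h'
  omega

lemma r_ne_one {F : Type*} [Field F] (h3 : (3 : F) ≠ 0) {r : F} (hr : r ^ 2 + r + 1 = 0) :
    r ≠ 1 := by
  rintro rfl; apply h3; linear_combination hr

lemma r_sq_ne_one {F : Type*} [Field F] (h3 : (3 : F) ≠ 0) {r : F} (hr : r ^ 2 + r + 1 = 0) :
    r ^ 2 ≠ 1 := by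
  intro h; apply h3; linear_combination (r - 1) * h - (r - 2) * hr

lemma r_sq_ne_r {F : Type*} [Field F] (h3 : (3 : F) ≠ 0) {r : F} (hr : r ^ 2 + r + 1 = 0) :
    r ^ 2 ≠ r := by
  intro h; apply h3; linear_combination (2 * r + 1) * h + (1 - 2 * r) * hr + 2 * hr

lemma trich (hp3 : p % 3 = 1) {r : ZMod p} (hr : r ^ 2 + r + 1 = 0) {y : ZMod p} (hy : y ≠ 0) :
    y ^ ((p - 1) / 3) = 1 ∨ y ^ ((p - 1) / 3) = r ∨ y ^ ((p - 1) / 3) = r ^ 2 := by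
  have h1 : (y ^ ((p - 1) / 3)) ^ 3 = 1 := by
    rw [← pow_mul, Nat.div_mul_cancel (by omega)]
    exact ZMod.pow_card_sub_one_eq_one hy
  generalize y ^ ((p - 1) / 3) = z at *
  have : (z - 1) * ((z - r) * (z - r ^ 2)) = 0 := by
    linear_combination h1 + (-(z-1)*z + (z-1)*(r-1)) * hr
  rcases mul_eq_zero.1 this with h | h
  · left; linear_combination h
  rcases mul_eq_zero.1 h with h | h
  · right; left; linear_combination h
  · right; right; linear_combination h

lemma cvals (hp3 : p % 3 = 1) {r : ZMod p} (hr : r ^ 2 + r + 1 = 0) {y : ZMod p} (hy : y ≠ 0) :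
    (y ^ ((p - 1) / 3) = 1 ∧ c0 r y = 1 ∧ c1 r y = 0) ∨
    (y ^ ((p - 1) / 3) = r ∧ c0 r y = 0 ∧ c1 r y = 1) ∨
    (y ^ ((p - 1) / 3) = r ^ 2 ∧ c0 r y = -1 ∧ c1 r y = -1) := by
  have h3 := three_ne hp3
  have e1 := r_ne_one h3 hr
  have e2 := r_sq_ne_one h3 hr
  have e3 := r_sq_ne_r h3 hr
  rcases trich hp3 hr hy with h | h | h
  · left; simp [c0, c1, hy, h]
  · right; left; simp [c0, c1, hy, h, e1]
  · right; right; simp [c0, c1, hy, h, e2, e3]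

lemma cub {R : Type*} [CommRing R] {w : R} (hw : w ^ 2 + w + 1 = 0) : w ^ 3 = 1 := by
  linear_combination (w - 1) * hw

/-- The value of the cubic character. -/
lemma cvals' (hp3 : p % 3 = 1) {r : ZMod p} (hr : r ^ 2 + r + 1 = 0)
    {R : Type*} [CommRing R] {w : R} (hw : w ^ 2 + w + 1 = 0) {y : ZMod p} (hy : y ≠ 0) :
    ∃ i : ℕ, y ^ ((p - 1) / 3) = r ^ i ∧ (c0 r y : R) + c1 r y * w = w ^ i := by
  rcases cvals hp3 hr hy with ⟨h, h0, h1⟩ | ⟨h, h0, h1⟩ | ⟨h, h0, h1⟩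
  · exact ⟨0, by simp [h], by simp [h0, h1]⟩
  · exact ⟨1, by simp [h], by simp [h0, h1]⟩
  · refine ⟨2, by simp [h], ?_⟩
    rw [h0, h1]; push_cast; linear_combination -hw

lemma pow_inj (hp3 : p % 3 = 1) {r : ZMod p} (hr : r ^ 2 + r + 1 = 0)
    {R : Type*} [CommRing R] {w : R} (hw : w ^ 2 + w + 1 = 0) {i j : ℕ} (h : r ^ i = r ^ j) :
    w ^ i = w ^ j := by
  have h3 := three_ne hp3
  have o : orderOf r = 3 := orderOf_eq_prime (cub hr) (r_ne_one h3 hr)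
  have hu : r ≠ 0 := by rintro rfl; simp at hr
  have : i % 3 = j % 3 := by
    rw [pow_eq_pow_mod i (cub hr), pow_eq_pow_mod j (cub hr)] at h
    exact pow_injOn_Iio_orderOf (by simp [o]; omega) (by simp [o]; omega) h
  rw [pow_eq_pow_mod i (cub hw), pow_eq_pow_mod j (cub hw), this]

/-- The cubic character modulo `p` attached to the pair of cube roots of unity `r`, `w`. -/
def chi (hp3 : p % 3 = 1) {r : ZMod p} (hr : r ^ 2 + r + 1 = 0)
    {R : Type*} [CommRing R] {w : R} (hw : w ^ 2 + w + 1 = 0) : MulChar (ZMod p) R where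
  toFun y := (c0 r y : R) + c1 r y * w
  map_one' := by simp [c0, c1]
  map_mul' x y := by
    by_cases hx : x = 0
    · subst hx; simp [c0, c1]
    by_cases hy : y = 0
    · subst hy; simp [c0, c1]
    obtain ⟨i, hi, hi'⟩ := cvals' hp3 hr hw hx
    obtain ⟨j, hj, hj'⟩ := cvals' hp3 hr hw hy
    obtain ⟨k, hk, hk'⟩ := cvals' hp3 hr hw (mul_ne_zero hx hy)
    rw [hi', hj', hk', ← pow_add]
    apply pow_inj hp3 hr hw
    rw [← hk, mul_pow, hi, hj, pow_add]
  map_nonunit' y hy := by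
    have : y = 0 := by simpa using hy
    subst this; simp [c0, c1]

lemma chi_apply (hp3 : p % 3 = 1) {r : ZMod p} (hr : r ^ 2 + r + 1 = 0)
    {R : Type*} [CommRing R] {w : R} (hw : w ^ 2 + w + 1 = 0) (y : ZMod p) :
    chi hp3 hr hw y = (c0 r y : R) + c1 r y * w := rfl

lemma chi_jacobi (hp3 : p % 3 = 1) {r : ZMod p} (hr : r ^ 2 + r + 1 = 0)
    {R : Type*} [CommRing R] {w : R} (hw : w ^ 2 + w + 1 = 0) :
    jacobiSum (chi hp3 hr hw) (chi hp3 hr hw) =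
      ((∑ x : ZMod p, c0 r (x * (1 - x)) : ℤ) : R) +
        ((∑ x : ZMod p, c1 r (x * (1 - x)) : ℤ) : R) * w := by
  simp only [jacobiSum, ← map_mul]
  simp only [chi_apply]
  push_cast
  rw [Finset.sum_add_distrib, Finset.sum_mul]

lemma chi_pow_three (hp3 : p % 3 = 1) {r : ZMod p} (hr : r ^ 2 + r + 1 = 0)
    {R : Type*} [CommRing R] {w : R} (hw : w ^ 2 + w + 1 = 0) : chi hp3 hr hw ^ 3 = 1 := by
  ext y
  rw [MulChar.pow_apply_coe, MulChar.one_apply_coe, chi_apply]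
  obtain ⟨i, hi, hi'⟩ := cvals' hp3 hr hw y.ne_zero
  rw [hi', ← pow_mul, mul_comm, pow_mul, cub hw, one_pow]

lemma w2 {R : Type*} [CommRing R] {w : R} (hw : w ^ 2 + w + 1 = 0) :
    (w ^ 2) ^ 2 + w ^ 2 + 1 = 0 := by
  linear_combination (w ^ 2 - w + 1) * hw

lemma chi_sq (hp3 : p % 3 = 1) {r : ZMod p} (hr : r ^ 2 + r + 1 = 0)
    {R : Type*} [CommRing R] {w : R} (hw : w ^ 2 + w + 1 = 0) :
    chi hp3 hr hw ^ 2 = chi hp3 hr (w2 hw) := by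
  ext y
  rw [MulChar.pow_apply_coe, chi_apply, chi_apply]
  rcases cvals hp3 hr y.ne_zero with ⟨h, h0, h1⟩ | ⟨h, h0, h1⟩ | ⟨h, h0, h1⟩ <;> rw [h0, h1] <;>
    push_cast
  · ring
  · ring
  · linear_combination 2 * hw

lemma chi_inv (hp3 : p % 3 = 1) {r : ZMod p} (hr : r ^ 2 + r + 1 = 0)
    {R : Type*} [CommRing R] {w : R} (hw : w ^ 2 + w + 1 = 0) :
    (chi hp3 hr hw)⁻¹ = chi hp3 hr (w2 hw) := by
  rw [← chi_sq hp3 hr hw, inv_eq_iff_mul_eq_one, ← pow_succ', chi_pow_three]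

lemma chi_ne_one (hp3 : p % 3 = 1) {r : ZMod p} (hr : r ^ 2 + r + 1 = 0)
    {F : Type*} [Field F] (h3 : (3 : F) ≠ 0) {w : F} (hw : w ^ 2 + w + 1 = 0) :
    chi hp3 hr hw ≠ 1 := by
  intro h
  obtain ⟨g, hg⟩ := IsCyclic.exists_generator (α := (ZMod p)ˣ)
  have ho : orderOf g = p - 1 := by
    rw [orderOf_eq_card_of_forall_mem_zpowers hg, Nat.card_eq_fintype_card, ZMod.card_units]
  have h1 : chi hp3 hr hw g = 1 := by rw [h, MulChar.one_apply_coe]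
  have hp := (Fact.out : p.Prime).two_le
  rw [chi_apply] at h1
  rcases cvals hp3 hr g.ne_zero with ⟨h, h0, h2⟩ | ⟨h, h0, h2⟩ | ⟨h, h0, h2⟩ <;> rw [h0, h2] at h1
  · have : g ^ ((p - 1) / 3) = 1 := by
      ext; push_cast; exact h
    have := Nat.le_of_dvd (by omega) (orderOf_dvd_of_pow_eq_one this)
    omega
  · apply r_ne_one h3 hw; push_cast at h1; linear_combination h1
  · apply r_sq_ne_one h3 hw; push_cast at h1; linear_combination h1 + hw

lemma chi_eq_iff (hp3 : p % 3 = 1) {r : ZMod p} (hr : r ^ 2 + r + 1 = 0)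
    {F : Type*} [Field F] (h3 : (3 : F) ≠ 0) {w : F} (hw : w ^ 2 + w + 1 = 0)
    {y : ZMod p} (hy : y ≠ 0) :
    chi hp3 hr hw y = w ↔ y ^ ((p - 1) / 3) = r := by
  have h3' := three_ne hp3
  have e1 := r_ne_one h3' hr
  have e3 := r_sq_ne_r h3' hr
  have f1 := r_ne_one h3 hw
  have f3 := r_sq_ne_r h3 hw
  rw [chi_apply]
  rcases cvals hp3 hr hy with ⟨h, h0, h2⟩ | ⟨h, h0, h2⟩ | ⟨h, h0, h2⟩ <;> rw [h0, h2, h]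
  · simp [e1.symm, f1.symm]
  · simp
  · have : (((-1 : ℤ) : F) + ((-1 : ℤ) : F) * w) = w ^ 2 := by push_cast; linear_combination -hw
    rw [this]; simp [e3, f3]

lemma chi_self (hp3 : p % 3 = 1) {r : ZMod p} (hr : r ^ 2 + r + 1 = 0) (y : ZMod p) :
    chi hp3 hr hr y = y ^ ((p - 1) / 3) := by
  have hp := (Fact.out : p.Prime).two_le
  by_cases hy : y = 0
  · subst hy
    rw [zero_pow (by omega)]; simp [chi_apply, c0, c1]
  obtain ⟨i, hi, hi'⟩ := cvals' hp3 hr hr hy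
  rw [chi_apply, hi', hi]

lemma jac_mod_p (hp3 : p % 3 = 1) {r : ZMod p} (hr : r ^ 2 + r + 1 = 0) :
    jacobiSum (chi hp3 hr hr) (chi hp3 hr hr) = 0 := by
  have hp := (Fact.out : p.Prime).two_le
  simp only [jacobiSum, ← map_mul]
  simp only [chi_self]
  have : ∀ x : ZMod p, (x * (1 - x)) ^ ((p - 1) / 3) = ∑ m ∈ Finset.range ((p - 1) / 3 + 1),
      (((-1) ^ m * (((p - 1) / 3).choose m : ZMod p)) * x ^ ((p - 1) / 3 + m)) := by
    intro x
    rw [mul_pow, sub_eq_neg_add, add_pow, Finset.mul_sum]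
    refine Finset.sum_congr rfl fun m _ => ?_
    rw [neg_pow, pow_add]; ring
  simp_rw [this]
  rw [Finset.sum_comm]
  refine Finset.sum_eq_zero fun m hm => ?_
  rw [← Finset.mul_sum, FiniteField.sum_pow_lt_card_sub_one, mul_zero]
  rw [ZMod.card]
  have := Finset.mem_range.1 hm
  omega

/-- The coefficients of the Jacobi sum. -/
lemma jac_coeffs (hp3 : p % 3 = 1) {r : ZMod p} (hr : r ^ 2 + r + 1 = 0) :
    ∃ a b : ℤ, a ^ 2 - a * b + b ^ 2 = p ∧ 3 ∣ b ∧ (a : ZMod p) + b * r = 0 ∧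
      ∀ (F : Type) [Field F] (w : F) (hw : w ^ 2 + w + 1 = 0),
        jacobiSum (chi hp3 hr hw) (chi hp3 hr hw) = a + b * w := by
  refine ⟨∑ x : ZMod p, c0 r (x * (1 - x)), ∑ x : ZMod p, c1 r (x * (1 - x)), ?_, ?_, ?_,
    fun F _ w hw => chi_jacobi hp3 hr hw⟩
  rotate_left 2
  · rw [← chi_jacobi hp3 hr hr]; exact jac_mod_p hp3 hr
  all_goals
    have hζ := Complex.isPrimitiveRoot_exp 3 (by norm_num)
    set w := Complex.exp (2 * Real.pi * Complex.I / (3 : ℕ)) with hwdef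
    have h3 : (3 : ℂ) ≠ 0 := by norm_num
    have hw : w ^ 2 + w + 1 = 0 := by
      have h1 : (w - 1) * (w ^ 2 + w + 1) = 0 := by linear_combination hζ.pow_eq_one
      rcases mul_eq_zero.1 h1 with h | h
      · exact absurd (by linear_combination h) (hζ.ne_one (by norm_num))
      · exact h
    have hJ := chi_jacobi hp3 hr hw
    have hJ2 := chi_jacobi hp3 hr (w2 hw)
    generalize ∑ x : ZMod p, c0 r (x * (1 - x)) = a at *
    generalize ∑ x : ZMod p, c1 r (x * (1 - x)) = b at *
  · have hn := jacobiSum_mul_jacobiSum_inv (F := ZMod p) (F' := ℂ)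
      (χ := chi hp3 hr hw) (φ := chi hp3 hr hw)
      (by rw [ringChar.eq ℂ 0, ZMod.ringChar_zmod_n]; exact (Fact.out : p.Prime).ne_zero.symm)
      (chi_ne_one hp3 hr h3 hw) (chi_ne_one hp3 hr h3 hw)
      (by rw [← pow_two, chi_sq]; exact chi_ne_one hp3 hr h3 _)
    rw [chi_inv, hJ, hJ2, ZMod.card] at hn
    have : ((a ^ 2 - a * b + b ^ 2 : ℤ) : ℂ) = ((p : ℤ) : ℂ) := by
      push_cast
      rw [← hn]
      linear_combination (-(a : ℂ) * b  - b ^ 2 * (w - 1)) * hw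
    exact_mod_cast this
  · obtain ⟨z, hz, hz'⟩ := exists_jacobiSum_eq_neg_one_add (F := ZMod p) (R := ℂ) (n := 3)
      (by norm_num) (chi_pow_three hp3 hr hw) (chi_pow_three hp3 hr hw)
      (by rw [ZMod.card]; omega) hζ
    have hform : ∃ c d : ℤ, z = c + d * w := by
      clear hz'
      induction hz using Algebra.adjoin_induction with
      | mem x hx => 
        rw [Set.mem_singleton_iff] at hx
        exact ⟨0, 1, by simp [hx]⟩
      | algebraMap n => exact ⟨n, 0, by simp⟩
      | add x y _ _ hx hy =>
        obtain ⟨c, d, h⟩ := hx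
        obtain ⟨c', d', h'⟩ := hy
        exact ⟨c + c', d + d', by rw [h, h']; push_cast; ring⟩
      | mul x y _ _ hx hy =>
        obtain ⟨c, d, h⟩ := hx
        obtain ⟨c', d', h'⟩ := hy
        refine ⟨c * c' - d * d', c * d' + d * c' - d * d', ?_⟩
        rw [h, h']; push_cast; linear_combination (d : ℂ) * d' * hw
    obtain ⟨c, d, rfl⟩ := hform
    rw [hJ] at hz'
    have him : w.im ≠ 0 := by
      intro h0
      have h1 := congrArg Complex.re hw
      simp [pow_two, h0] at h1
      nlinarith [sq_nonneg (w.re + 1/2)]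
    have e : ((a - (-1 + 3 * d) : ℤ) : ℂ) + ((b - (3 * d - 3 * c) : ℤ) : ℂ) * w = 0 := by
      push_cast
      linear_combination hz' + (c + d * w - 3 * d) * hw
    have e2 := congrArg Complex.im e
    simp only [Complex.add_im, Complex.mul_im, Complex.intCast_im, Complex.intCast_re, zero_add,
      zero_mul, add_zero, Complex.zero_im, mul_eq_zero, him, or_false] at e2
    have e3 : b - (3 * d - 3 * c) = 0 := by exact_mod_cast e2
    exact ⟨d - c, by linarith⟩


/-- Cubic reciprocity for a rational prime, in a field of characteristic `q`. -/
lemma recip (hp3 : p % 3 = 1) {r : ZMod p} (hr : r ^ 2 + r + 1 = 0) {q : ℕ} [Fact q.Prime]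
    (hq5 : 5 ≤ q) (hqp : q ≠ p) {F : Type} [Field F] [CharP F q] [IsAlgClosed F]
    {w : F} (hw : w ^ 2 + w + 1 = 0) {a b : ℤ} (hab : a ^ 2 - a * b + b ^ 2 = p)
    (hJ : jacobiSum (chi hp3 hr hw) (chi hp3 hr hw) = a + b * w) :
    (q % 3 = 1 → ((a : F) + b * w) ^ ((q - 1) / 3) =
      chi hp3 hr hw q * ((a : F) + b * w ^ 2) ^ ((q - 1) / 3)) ∧
    (q % 3 = 2 → ((a : F) + b * w ^ 2) ^ ((q + 1) / 3) =
      chi hp3 hr hw q * ((a : F) + b * w) ^ ((q + 1) / 3)) := by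
  have hpP := (Fact.out : p.Prime)
  have hqP := (Fact.out : q.Prime)
  have h3 : (3 : F) ≠ 0 := by
    have : ((3 : ℕ) : F) ≠ 0 := by
      rw [Ne, CharP.cast_eq_zero_iff F q]
      intro h
      have := Nat.le_of_dvd (by norm_num) h
      omega
    exact_mod_cast this
  have hpF : (p : F) ≠ 0 := by
    rw [Ne, CharP.cast_eq_zero_iff F q, Nat.prime_dvd_prime_iff_eq hqP hpP]
    exact hqp
  have hqZ : (q : ZMod p) ≠ 0 := by
    rw [Ne, ZMod.natCast_eq_zero_iff, Nat.prime_dvd_prime_iff_eq hpP hqP]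
    exact hqp.symm
  have hqU : IsUnit (q : ZMod p) := isUnit_iff_ne_zero.2 hqZ
  have : NeZero (p : F) := ⟨hpF⟩
  obtain ⟨ζ, hζ⟩ := HasEnoughRootsOfUnity.exists_primitiveRoot F p
  set χ := chi hp3 hr hw with hχ
  have hχ1 : χ ≠ 1 := chi_ne_one hp3 hr h3 hw
  have hχ3 : χ ^ 3 = 1 := chi_pow_three hp3 hr hw
  have ho : orderOf χ = 3 := orderOf_eq_prime hχ3 hχ1
  set ψ := AddChar.zmodChar p hζ.pow_eq_one with hψdef
  have hψ : ψ.IsPrimitive := AddChar.zmodChar_primitive_of_primitive_root p hζ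
  have hm1 : χ (-1) = 1 := by
    have e1 : χ (-1) ^ 3 = 1 := by
      rw [← MulChar.pow_apply' _ (by norm_num), hχ3, MulChar.one_apply (by simp)]
    have e2 : χ (-1) ^ 2 = 1 := by rw [← map_pow]; simp
    calc χ (-1) = χ (-1) ^ 3 := by rw [pow_succ, e2, one_mul]
      _ = 1 := e1
  have hg3 : gaussSum χ ψ ^ 3 = p * (a + b * w) := by
    have := gaussSum_pow_eq_prod_jacobiSum (by rw [ho]; norm_num : 2 ≤ orderOf χ) hψ
    rw [ho, hm1, ZMod.card, one_mul] at this
    simpa [hJ] using this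
  have hg0 : gaussSum χ ψ ≠ 0 := gaussSum_ne_zero_of_nontrivial (by rwa [ZMod.card]) hχ1 hψ
  have hgg : gaussSum χ ψ * gaussSum (χ ^ 2) ψ = p := by
    have := gaussSum_mul_gaussSum_pow_orderOf_sub_one hχ1 hψ
    rwa [ho, hm1, one_mul, ZMod.card] at this
  have hfrob : gaussSum χ ψ ^ q = gaussSum (χ ^ q) (ψ.mulShift q) := by
    rw [gaussSum_frob, AddChar.pow_mulShift]
  have hshift : ∀ φ : MulChar (ZMod p) F,
      φ q * gaussSum φ (ψ.mulShift q) = gaussSum φ ψ := by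
    intro φ
    have := gaussSum_mulShift φ ψ hqU.unit
    simpa using this
  have hc3 : χ q ^ 3 = 1 := by
    rw [← MulChar.pow_apply' _ (by norm_num), hχ3, MulChar.one_apply hqU]
  have hnorm : ((a : F) + b * w) * (a + b * w ^ 2) = p := by
    have : ((a ^ 2 - a * b + b ^ 2 : ℤ) : F) = ((p : ℤ) : F) := by rw [hab]
    push_cast at this
    rw [← this]
    linear_combination ((a : F) * b + b ^ 2 * (w - 1)) * hw
  have hJ0 : (a : F) + b * w ≠ 0 := by
    intro h; rw [h, zero_mul] at hnorm; exact hpF hnorm.symm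
  have hintq : ∀ n : ℤ, (n : F) ^ q = n := fun n => by
    rw [← frobenius_def, map_intCast]
  have hJq : ((a : F) + b * w) ^ q = a + b * w ^ q := by
    rw [add_pow_char, mul_pow, hintq, hintq]
  set J := (a : F) + b * w with hJdef
  set J' := (a : F) + b * w ^ 2 with hJ'def
  constructor
  · intro hq3
    obtain ⟨n, hn⟩ : ∃ n, q = 3 * n + 1 := ⟨q / 3, by omega⟩
    have e : (q - 1) / 3 = n := by omega
    rw [e]
    have hχq : χ ^ q = χ := by rw [hn, pow_succ, pow_mul, hχ3]; simp
    have hwq : w ^ q = w := by rw [hn, pow_succ, pow_mul, cub hw]; simp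
    rw [hχq] at hfrob
    have h1 : χ q * gaussSum χ ψ ^ q = gaussSum χ ψ := by rw [hfrob, hshift]
    have h2 : χ q * (p * J) ^ n = 1 := by
      apply mul_right_cancel₀ hg0
      rw [one_mul, ← hg3, ← pow_mul, mul_assoc, ← pow_succ, ← hn, h1]
    have h4 : J ^ (3 * n) = 1 := by
      apply mul_right_cancel₀ hJ0
      rw [one_mul, ← pow_succ, ← hn, hJq, hwq]
    rw [← hnorm] at h2
    apply mul_left_cancel₀ (pow_ne_zero (2 * n) hJ0)
    calc J ^ (2 * n) * J ^ n = J ^ (3 * n) := by ring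
      _ = χ q * (J * J' * J) ^ n := by rw [h4, h2]
      _ = _ := by ring
  · intro hq3
    obtain ⟨n, hn⟩ : ∃ n, q + 1 = 3 * n := ⟨(q + 1) / 3, by omega⟩
    obtain ⟨m, hm⟩ : ∃ m, q = 3 * m + 2 := ⟨q / 3, by omega⟩
    have e : (q + 1) / 3 = n := by omega
    rw [e]
    have hχq : χ ^ q = χ ^ 2 := by rw [hm, pow_add, pow_mul, hχ3]; simp
    have hwq : w ^ q = w ^ 2 := by rw [hm, pow_add, pow_mul, cub hw]; simp
    rw [hχq] at hfrob
    have h1 : χ q ^ 2 * gaussSum χ ψ ^ q = gaussSum (χ ^ 2) ψ := by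
      rw [hfrob, ← MulChar.pow_apply' _ (by norm_num), hshift]
    have h2 : (p * J) ^ n = χ q * p := by
      rw [← hg3, ← pow_mul, ← hn, ← hgg, ← h1, pow_succ]
      linear_combination (-gaussSum χ ψ ^ q * gaussSum χ ψ) * hc3
    have h4 : J ^ (3 * n) = p := by
      rw [← hn, pow_succ, hJq, hwq, ← hnorm, mul_comm]
    rw [← h4] at h2
    rw [h4, ← hnorm] at h2
    apply mul_left_cancel₀ (pow_ne_zero (2 * n) hJ0)
    calc J ^ (2 * n) * J' ^ n = (J * J' * J) ^ n := by ring
      _ = χ q * J ^ (3 * n) := by rw [h2, h4, hnorm]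
      _ = _ := by ring

/-- Cubic reciprocity in terms of `L, M`. -/
lemma recipLM (hp3 : p % 3 = 1) {L M : ℤ} (h : (4 * p : ℤ) = L ^ 2 + 27 * M ^ 2)
    {r : ZMod p} (hr : r ^ 2 + r + 1 = 0) (hrLM : (L : ZMod p) + 3 * M + 6 * M * r = 0)
    {q : ℕ} [Fact q.Prime]
    (hq5 : 5 ≤ q) (hqp : q ≠ p) {F : Type} [Field F] [CharP F q] [IsAlgClosed F]
    {w : F} (hw : w ^ 2 + w + 1 = 0) :
    (q % 3 = 1 → ((L : F) + 3 * M * (1 + 2 * w)) ^ ((q - 1) / 3) =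
      chi hp3 hr hw q * ((L : F) - 3 * M * (1 + 2 * w)) ^ ((q - 1) / 3)) ∧
    (q % 3 = 2 → ((L : F) - 3 * M * (1 + 2 * w)) ^ ((q + 1) / 3) =
      chi hp3 hr hw q * ((L : F) + 3 * M * (1 + 2 * w)) ^ ((q + 1) / 3)) := by
  obtain ⟨a, b, hab, ⟨N, rfl⟩, hmod, hJ⟩ := jac_coeffs hp3 hr
  have hpP := (Fact.out : p.Prime)
  have hp0 : (0 : ℤ) < p := by exact_mod_cast hpP.pos
  obtain ⟨K, hK⟩ : ∃ K, K = 2 * a - 3 * N := ⟨_, rfl⟩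
  have hKN : (4 * p : ℤ) = K ^ 2 + 27 * N ^ 2 := by rw [hK, ← hab]; ring
  have hdvd : (p : ℤ) ∣ M * K - N * L := by
    rw [← ZMod.intCast_zmod_eq_zero_iff_dvd, hK]
    push_cast at hmod ⊢
    linear_combination 2 * (M : ZMod p) * hmod - (N : ZMod p) * hrLM
  have hid : (L * K + 27 * M * N) ^ 2 + 27 * (M * K - N * L) ^ 2 = 16 * (p : ℤ) ^ 2 := by
    calc _ = (L ^ 2 + 27 * M ^ 2) * (K ^ 2 + 27 * N ^ 2) := by ring
      _ = _ := by rw [← h, ← hKN]; ring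
  have hz : M * K - N * L = 0 := by
    obtain ⟨c, hc⟩ := hdvd
    by_contra hne
    have hc0 : c ≠ 0 := by rintro rfl; simp at hc; exact hne hc
    have hc1 : 1 ≤ c ^ 2 := by have := sq_pos_of_ne_zero hc0; omega
    rw [hc] at hid
    nlinarith [sq_nonneg (L * K + 27 * M * N), mul_le_mul_of_nonneg_left hc1 (sq_nonneg (p : ℤ)),
      sq_pos_of_pos hp0]
  have hMN : M ^ 2 = N ^ 2 := by
    have : (4 * p : ℤ) * M ^ 2 = 4 * p * N ^ 2 := by
      calc (4 * p : ℤ) * M ^ 2 = (M * K) ^ 2 + 27 * M ^ 2 * N ^ 2 := by rw [hKN]; ring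
        _ = (N * L) ^ 2 + 27 * M ^ 2 * N ^ 2 := by rw [sub_eq_zero.1 hz]
        _ = _ := by rw [h]; ring
    exact mul_left_cancel₀ (by positivity) this
  have hKL : K ^ 2 = L ^ 2 := by linarith
  have key : ∃ ε : ℤ, ε ^ 2 = 1 ∧ K = ε * L ∧ N = ε * M := by
    by_cases hM0 : M = 0
    · have hN : N = 0 := by rw [hM0] at hMN; simpa using hMN.symm
      rcases sq_eq_sq_iff_eq_or_eq_neg.1 hKL with h1 | h1
      · exact ⟨1, by norm_num, by simp [h1], by simp [hN, hM0]⟩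
      · exact ⟨-1, by norm_num, by simp [h1], by simp [hN, hM0]⟩
    · rcases sq_eq_sq_iff_eq_or_eq_neg.1 hMN with h1 | h1
      · refine ⟨1, by norm_num, ?_, by simp [h1]⟩
        apply mul_left_cancel₀ hM0; rw [sub_eq_zero.1 hz, h1]; ring
      · refine ⟨-1, by norm_num, ?_, by simp [h1]⟩
        apply mul_left_cancel₀ hM0; rw [sub_eq_zero.1 hz, h1]; ring
  obtain ⟨ε, hε, hKe, hNe⟩ := key
  have hr' := recip hp3 hr hq5 hqp hw hab (hJ F w hw)
  have hεF : (ε : F) ^ 2 = 1 := by exact_mod_cast congrArg (Int.cast : ℤ → F) hε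
  have hKF : (2 : F) * a - 3 * N = ε * L := by
    have := congrArg (Int.cast : ℤ → F) (hK.symm.trans hKe)
    push_cast at this; exact this
  have hNF : (N : F) = ε * M := by rw [hNe]; push_cast; rfl
  have e1 : (L : F) + 3 * M * (1 + 2 * w) = (2 * ε) * ((a : F) + (3 * N : ℤ) * w) := by
    push_cast
    linear_combination (-(L : F) - 3 * M * (1 + 2 * w)) * hεF - (ε : F) * hKF
      - 3 * (ε : F) * (1 + 2 * w) * hNF
  have e2 : (L : F) - 3 * M * (1 + 2 * w) = (2 * ε) * ((a : F) + (3 * N : ℤ) * w ^ 2) := by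
    push_cast
    linear_combination (-(L : F) + 3 * M * (1 + 2 * w)) * hεF - (ε : F) * hKF
      + 3 * (ε : F) * (1 + 2 * w) * hNF - 6 * (ε : F) * N * hw
  rw [e1, e2]
  refine ⟨fun h1 => ?_, fun h1 => ?_⟩
  · simp only [mul_pow (2 * (ε : F))]
    rw [hr'.1 h1]; exact mul_left_comm _ _ _
  · simp only [mul_pow (2 * (ε : F))]
    rw [hr'.2 h1]; exact mul_left_comm _ _ _

end

instance factSeven : Fact (Nat.Prime 7) := ⟨by norm_num⟩

/-- Being a cube in the norm-one torus, in terms of a rational parameter `t`. -/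
lemma cube_crit {q : ℕ} [Fact q.Prime] {F : Type} [Field F] [CharP F q] [IsAlgClosed F]
    (h2 : (2 : F) ≠ 0) (h3 : (3 : F) ≠ 0)
    {w : F} (hw : w ^ 2 + w + 1 = 0) {X Y : ℤ} {n : ℕ}
    (hn : q = 3 * n + 1 ∨ q + 1 = 3 * n)
    (hC : (X : F) + 3 * Y * (1 + 2 * w) ≠ 0) (hC' : (X : F) - 3 * Y * (1 + 2 * w) ≠ 0) :
    ((X : F) + 3 * Y * (1 + 2 * w)) ^ n = ((X : F) - 3 * Y * (1 + 2 * w)) ^ n ↔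
      ∃ t : ℤ, (X : F) * (t ^ 2 - 1) = Y * (t ^ 3 - 9 * t) := by
  obtain ⟨s, hs⟩ : ∃ s, s = 1 + 2 * w := ⟨_, rfl⟩
  rw [← hs] at hC hC' ⊢
  have hs2 : s ^ 2 = -3 := by rw [hs]; linear_combination 4 * hw
  have hs0 : s ≠ 0 := by rintro rfl; apply h3; linear_combination hs2
  have h23 : (6 : F) * s ≠ 0 := by
    apply mul_ne_zero _ hs0
    have := mul_ne_zero h2 h3
    norm_num at this; exact this
  have hwn : w ^ (3 * n) = 1 := by rw [pow_mul, cub hw, one_pow]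
  have hsq : (q = 3 * n + 1 → s ^ q = s) ∧ (q + 1 = 3 * n → s ^ q = -s) := by
    have e0 : s ^ q = 1 + 2 * w ^ q := by
      have : (2 : F) ^ q = 2 := by rw [← frobenius_def, map_ofNat]
      rw [hs, add_pow_char, mul_pow, this, one_pow]
    refine ⟨fun h => ?_, fun h => ?_⟩
    · rw [e0, h, pow_succ, hwn, one_mul, hs]
    · have e1 : w ^ q * w = 1 := by rw [← pow_succ, h, hwn]
      have e2 : w ^ q = w ^ 2 := by
        linear_combination w ^ 2 * e1 - w ^ q * (cub hw)
      rw [e0, e2, hs]; linear_combination 2 * hw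
  have hintq : ∀ m : ℤ, (m : F) ^ q = m := fun m => by
    rw [← frobenius_def, map_intCast]
  constructor
  · intro h
    obtain ⟨z0, hz0⟩ := IsAlgClosed.exists_pow_nat_eq
      (((X : F) + 3 * Y * s) / (X - 3 * Y * s)) (show 0 < 3 by norm_num)
    obtain ⟨z, hz, hz1⟩ : ∃ z : F, z ^ 3 = ((X : F) + 3 * Y * s) / (X - 3 * Y * s) ∧ z ≠ 1 := by
      by_cases h1 : z0 = 1
      · refine ⟨w * z0, by rw [mul_pow, cub hw, one_mul, hz0], ?_⟩
        rw [h1, mul_one]; exact r_ne_one h3 hw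
      · exact ⟨z0, hz0, h1⟩
    have hzn : z ^ (3 * n) = 1 := by
      rw [pow_mul, hz, div_pow, h, div_self (pow_ne_zero _ hC')]
    have hz1' : z - 1 ≠ 0 := sub_ne_zero.2 hz1
    have hz0' : z ≠ 0 := by
      rintro rfl
      rw [zero_pow (by norm_num)] at hz
      exact div_ne_zero hC hC' hz.symm
    obtain ⟨t, ht⟩ : ∃ t, t = s * (z + 1) / (z - 1) := ⟨_, rfl⟩
    have htz : t * (z - 1) = s * (z + 1) := by rw [ht]; field_simp
    have htq : t ^ q = t := by
      have h4 : t ^ q * (z ^ q - 1) = s ^ q * (z ^ q + 1) := by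
        have := congrArg (· ^ q) htz
        simp only [mul_pow] at this
        rwa [sub_pow_char, add_pow_char, one_pow] at this
      apply mul_right_cancel₀ hz1'
      rcases hn with hn | hn
      · have hzq : z ^ q = z := by rw [hn, pow_succ, hzn, one_mul]
        rw [hzq, hsq.1 hn] at h4
        rw [h4, htz]
      · have hzq : z ^ q * z = 1 := by rw [← pow_succ, hn, hzn]
        rw [hsq.2 hn] at h4
        rw [htz]
        linear_combination (-z) * h4 + (t ^ q + s) * hzq
    have hmem : t ∈ (⊥ : Subfield F) := (Subfield.mem_bot_iff_pow_eq_self F q).2 htq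
    obtain ⟨m, hm⟩ : ∃ m : ℤ, (m : F) = t := by
      have hle : (⊥ : Subfield F) ≤ (ZMod.castHom (dvd_refl q) F).fieldRange := bot_le
      obtain ⟨x, hx⟩ := hle hmem
      obtain ⟨m, rfl⟩ := ZMod.intCast_surjective x
      exact ⟨m, by rw [← hx]; simp⟩
    refine ⟨m, ?_⟩
    rw [hm]
    have e1 : z * (t - s) = t + s := by linear_combination htz
    have e2 : z ^ 3 * (X - 3 * Y * s) = X + 3 * Y * s := by rw [hz, div_mul_cancel₀ _ hC']
    have e3 : (t + s) ^ 3 * (X - 3 * Y * s) = (t - s) ^ 3 * (X + 3 * Y * s) := by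
      rw [← e1, ← e2]; ring
    apply mul_left_cancel₀ h23
    linear_combination e3 - (2 * s * X - 18 * Y * s * t) * hs2
  · rintro ⟨t, ht⟩
    have e3 : ((t : F) + s) ^ 3 * (X - 3 * Y * s) = (t - s) ^ 3 * (X + 3 * Y * s) := by
      linear_combination 6 * s * ht + (2 * s * X - 18 * Y * s * t) * hs2
    have h2s : 2 * s ≠ 0 := mul_ne_zero h2 hs0
    have hp : (t : F) + s ≠ 0 := by
      intro h0
      rw [h0, zero_pow (by norm_num), zero_mul] at e3
      have h5 := pow_eq_zero_iff (by norm_num) |>.1 ((mul_eq_zero.1 e3.symm).resolve_right hC)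
      exact h2s (by linear_combination h0 - h5)
    have hm : (t : F) - s ≠ 0 := by
      intro h0
      rw [h0, zero_pow (by norm_num), zero_mul] at e3
      have h5 := pow_eq_zero_iff (by norm_num) |>.1 ((mul_eq_zero.1 e3).resolve_right hC')
      exact h2s (by linear_combination h5 - h0)
    have e4 := congrArg (· ^ n) e3
    simp only [mul_pow, ← pow_mul] at e4
    have e5 : ((t : F) + s) ^ (3 * n) = (t - s) ^ (3 * n) := by
      rcases hn with hn | hn
      · have u1 : ((t : F) + s) ^ (3 * n) = 1 := by
          apply mul_right_cancel₀ hp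
          rw [← pow_succ, ← hn, add_pow_char, hintq, hsq.1 hn, one_mul]
        have u2 : ((t : F) - s) ^ (3 * n) = 1 := by
          apply mul_right_cancel₀ hm
          rw [← pow_succ, ← hn, sub_pow_char, hintq, hsq.1 hn, one_mul]
        rw [u1, u2]
      · rw [← hn, pow_succ, pow_succ, add_pow_char, sub_pow_char, hintq, hsq.2 hn]; ring
    rw [e5] at e4
    exact (mul_left_cancel₀ (pow_ne_zero _ hm) e4).symm

end CubicRule

theorem rule_e_minus (p : ℕ) (hp : p.Prime) (hp3 : p % 3 = 1)
    (L M : ℤ) (hL : 0 < L) (hM : 0 < M) (h : (4 * p : ℤ) = L ^ 2 + 27 * M ^ 2)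
    (q : ℕ) (hq : q.Prime) (hq5 : 5 ≤ q) (hqp : q ≠ p)
    (hq7 : q % 7 = 3 ∨ q % 7 = 4) :
    ((q : ZMod p) ^ ((p - 1) / 3) =
        ((-(L + 3 * M) : ℤ) : ZMod p) * (((6 * M : ℤ) : ZMod p))⁻¹) ↔
      ∃ t : ℤ, (t ^ 3 - t ^ 2 - 9 * t + 1) * L ≡
        -(t ^ 3 + 27 * t ^ 2 - 9 * t - 27) * M [ZMOD (q : ℤ)] := by
  open CubicRule in
  have : Fact p.Prime := ⟨hp⟩
  have : Fact q.Prime := ⟨hq⟩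
  let F := AlgebraicClosure (ZMod q)
  have hchar : CharP F q := charP_of_injective_algebraMap (algebraMap (ZMod q) F).injective q
  have hnat : ∀ m : ℕ, ¬ q ∣ m → (m : F) ≠ 0 := fun m hm h0 =>
    hm ((CharP.cast_eq_zero_iff F q m).1 h0)
  have hprime : ∀ m : ℕ, m.Prime → q ≠ m → (m : F) ≠ 0 := fun m hm hne =>
    hnat m fun hd => hne ((Nat.prime_dvd_prime_iff_eq hq hm).1 hd)
  have h2 : (2 : F) ≠ 0 := by exact_mod_cast hprime 2 (by norm_num) (by omega)
  have h3 : (3 : F) ≠ 0 := by exact_mod_cast hprime 3 (by norm_num) (by omega)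
  have h7 : (7 : F) ≠ 0 := by exact_mod_cast hprime 7 (by norm_num) (by omega)
  have hpF : (p : F) ≠ 0 := hprime p hp hqp
  -- a cube root of unity in `F`
  obtain ⟨w, hw⟩ : ∃ w : F, w ^ 2 + w + 1 = 0 := by
    have : NeZero ((3 : ℕ) : F) := ⟨by exact_mod_cast h3⟩
    obtain ⟨w, hw⟩ := HasEnoughRootsOfUnity.exists_primitiveRoot F 3
    refine ⟨w, ?_⟩
    have h1 : (w - 1) * (w ^ 2 + w + 1) = 0 := by linear_combination hw.pow_eq_one
    exact (mul_eq_zero.1 h1).resolve_left (sub_ne_zero.2 (hw.ne_one (by norm_num)))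
  -- the cube root of unity modulo `p`
  have hp7 : 7 ≤ p := by
    have := hp.two_le
    by_contra hlt
    interval_cases p <;> revert hp <;> simp_all <;> norm_num
  have h6M : ((6 * M : ℤ) : ZMod p) ≠ 0 := by
    rw [Ne, ZMod.intCast_zmod_eq_zero_iff_dvd]
    intro hd
    have hpZ : Prime (p : ℤ) := Nat.prime_iff_prime_int.1 hp
    have hp7' : (7 : ℤ) ≤ p := by exact_mod_cast hp7
    rcases hpZ.dvd_mul.1 hd with hd | hd
    · have := Int.le_of_dvd (by norm_num) hd
      omega
    · have := Int.le_of_dvd hM hd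
      nlinarith
  obtain ⟨r, hrdef⟩ : ∃ r, r = ((-(L + 3 * M) : ℤ) : ZMod p) * (((6 * M : ℤ) : ZMod p))⁻¹ :=
    ⟨_, rfl⟩
  have hrLM : (L : ZMod p) + 3 * M + 6 * M * r = 0 := by
    have : r * ((6 * M : ℤ) : ZMod p) = ((-(L + 3 * M) : ℤ) : ZMod p) := by
      rw [hrdef, mul_assoc, inv_mul_cancel₀ h6M, mul_one]
    push_cast at this
    linear_combination this
  have hr : r ^ 2 + r + 1 = 0 := by
    have h0 : (L : ZMod p) ^ 2 + 27 * M ^ 2 = 0 := by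
      have := congrArg (Int.cast : ℤ → ZMod p) h
      push_cast at this
      rw [← this]; simp
    apply mul_left_cancel₀ (pow_ne_zero 2 h6M)
    push_cast
    linear_combination h0 + (6 * M * r - L + 3 * M) * hrLM
  rw [← hrdef]
  have hqZ : (q : ZMod p) ≠ 0 := by
    rw [Ne, ZMod.natCast_eq_zero_iff, Nat.prime_dvd_prime_iff_eq hp hq]
    exact hqp.symm
  rw [← chi_eq_iff hp3 hr h3 hw hqZ]
  have R1 := recipLM hp3 h hr hrLM hq5 hqp hw
  -- the auxiliary prime 7
  have hr4 : (4 : ZMod 7) ^ 2 + 4 + 1 = 0 := by decide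
  have R2 := recipLM (p := 7) (L := 1) (M := 1) (by norm_num) (by norm_num) hr4 (by decide)
    hq5 (by omega) hw
  have hchi7 : chi (p := 7) (by norm_num) hr4 hw q = w ^ 2 := by
    have hq' : (q : ZMod 7) = 3 ∨ (q : ZMod 7) = 4 := by
      rcases hq7 with h | h
      · left; rw [← ZMod.natCast_mod, h]; rfl
      · right; rw [← ZMod.natCast_mod, h]; rfl
    have : c0 (4 : ZMod 7) q = -1 ∧ c1 (4 : ZMod 7) q = -1 := by
      rcases hq' with h | h <;> rw [h] <;> decide
    rw [chi_apply, this.1, this.2]; push_cast; linear_combination -hw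
  rw [hchi7] at R2
  have hs2 : (1 + 2 * w) ^ 2 = -3 := by linear_combination 4 * hw
  obtain ⟨s, hs⟩ : ∃ s, s = 1 + 2 * w := ⟨_, rfl⟩
  have crit := fun n hn hC hC' => cube_crit (q := q) (F := F) h2 h3 hw (X := L - 27 * M)
    (Y := L + M) (n := n) hn hC hC'
  rw [← hs] at R1 R2 hs2
  simp only [← hs] at crit
  set A := (L : F) + 3 * M * s with hA
  set A' := (L : F) - 3 * M * s with hA'
  set B := ((1 : ℤ) : F) + 3 * (1 : ℤ) * s with hB
  set B' := ((1 : ℤ) : F) - 3 * (1 : ℤ) * s with hB'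
  have hAA : A * A' = 4 * p := by
    have := congrArg (Int.cast : ℤ → F) h
    push_cast at this
    rw [hA, hA', this]; linear_combination (-9 * (M : F) ^ 2) * hs2
  have hBB : B * B' = 4 * 7 := by
    rw [hB, hB']; push_cast; linear_combination (-9) * hs2
  have h4 : (4 : F) ≠ 0 := by
    have := mul_ne_zero h2 h2
    norm_num at this; exact this
  have hA0 : A ≠ 0 := left_ne_zero_of_mul (hAA ▸ mul_ne_zero h4 hpF)
  have hA0' : A' ≠ 0 := right_ne_zero_of_mul (hAA ▸ mul_ne_zero h4 hpF)
  have hB0 : B ≠ 0 := left_ne_zero_of_mul (hBB ▸ mul_ne_zero h4 h7)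
  have hB0' : B' ≠ 0 := right_ne_zero_of_mul (hBB ▸ mul_ne_zero h4 h7)
  have hCAB : ((L - 27 * M : ℤ) : F) + 3 * ((L + M : ℤ) : F) * s = A * B := by
    rw [hA, hB]; push_cast; linear_combination (-9 * (M : F)) * hs2
  have hCAB' : ((L - 27 * M : ℤ) : F) - 3 * ((L + M : ℤ) : F) * s = A' * B' := by
    rw [hA', hB']; push_cast; linear_combination (-9 * (M : F)) * hs2
  rw [hCAB, hCAB'] at crit
  have hw3 := cub hw
  have hchi : ∃ n : ℕ, (q = 3 * n + 1 ∨ q + 1 = 3 * n) ∧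
      (chi hp3 hr hw q = w ↔ (A * B) ^ n = (A' * B') ^ n) := by
    generalize chi hp3 hr hw q = c at R1 ⊢
    have hq3 : q % 3 = 1 ∨ q % 3 = 2 := by
      have : q % 3 ≠ 0 := fun h0 => by
        have := (Nat.prime_dvd_prime_iff_eq Nat.prime_three hq).1 (Nat.dvd_of_mod_eq_zero h0)
        omega
      omega
    rcases hq3 with hq3 | hq3
    · refine ⟨(q - 1) / 3, Or.inl (by omega), ?_⟩
      rw [mul_pow, mul_pow, R1.1 hq3, R2.1 hq3]
      have hne := mul_ne_zero (pow_ne_zero ((q - 1) / 3) hA0') (pow_ne_zero ((q - 1) / 3) hB0')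
      constructor
      · rintro rfl
        linear_combination (A' ^ ((q - 1) / 3) * B' ^ ((q - 1) / 3)) * hw3
      · intro h5
        have : c * w ^ 2 = 1 := by
          apply mul_right_cancel₀ hne; linear_combination h5
        linear_combination w * this - c * hw3
    · refine ⟨(q + 1) / 3, Or.inr (by omega), ?_⟩
      rw [mul_pow, mul_pow, R1.2 hq3, R2.2 hq3]
      have hne := mul_ne_zero (pow_ne_zero ((q + 1) / 3) hA0) (pow_ne_zero ((q + 1) / 3) hB0)
      constructor
      · rintro rfl
        linear_combination (-(A ^ ((q + 1) / 3) * B ^ ((q + 1) / 3))) * hw3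
      · intro h5
        have : c * w ^ 2 = 1 := by
          apply mul_right_cancel₀ hne; linear_combination -h5
        linear_combination w * this - c * hw3
  obtain ⟨n, hn, hiff⟩ := hchi
  rw [hiff, crit n hn (mul_ne_zero hA0 hB0) (mul_ne_zero hA0' hB0')]
  refine exists_congr fun t => ?_
  rw [Int.modEq_comm, Int.modEq_iff_dvd, ← CharP.intCast_eq_zero_iff F q]
  push_cast
  constructor
  · intro h5; linear_combination -h5
  · intro h5; linear_combination -h5
end
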